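/- arXiv:1607.08536 — 2 statements merged into one kernel-verified Lean document; each statement's English description precedes it below -/
import Mathlib

section
/- Let R > 0, let k ≥ 1 be an integer, and assume that either ñ = 2, or ñ > 2 and p ≤ ñ/(ñ−2). Consider either the equation −P⁺[w](r) = |w(r)|^{p−1}w(r) (the radial form of −𝓜⁺_{λ,Λ}(D²u) = |u|^{p−1}u) or the equation −P⁻[w](r) = |w(r)|^{p−1}w(r) (the radial form of −𝓜⁻_{λ,Λ}(D²u) = |u|^{p−1}u). Then there exist a function w : [0,R] → ℝ, continuously differentiable on [0,R] and twice continuously differentiable on (0,R], with w'(0) = 0, w(R) = 0, satisfying the chosen equation for all r ∈ (0,R), and a finite sequence 0 = r₀ < r₁ < … < r_k = R such that w(0) > 0 and (−1)^{j−1} w(r) > 0 for all r ∈ (r_{j−1}, r_j), j = 1,…,k. Moreover there also exists such a solution with w(0) < 0 and (−1)^{j} w(r) > 0 on (r_{j−1}, r_j) for j = 1,…,k. (These are radial sign-changing solutions with k nodal regions of the Dirichlet problem for the Pucci extremal operators in the ball B_R.) -/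
open Real Set

/-- `P⁺[u](r)`: the Pucci maximal operator `𝓜⁺_{λ,Λ}` evaluated on the Hessian of the
radial function `v(x) = u(|x|)`, expressed through `u'` and `u''`. -/
noncomputable def Pp (n : ℕ) (lam Lam : ℝ) (u' u'' : ℝ → ℝ) (r : ℝ) : ℝ :=
  Lam * max (u'' r) 0 + lam * min (u'' r) 0 +
    ((n : ℝ) - 1) * (Lam * max (u' r / r) 0 + lam * min (u' r / r) 0)

/-- `P⁻[u](r)`: the Pucci minimal operator `𝓜⁻_{λ,Λ}` evaluated on the Hessian of the
radial function `v(x) = u(|x|)`. -/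
noncomputable def Pm (n : ℕ) (lam Lam : ℝ) (u' u'' : ℝ → ℝ) (r : ℝ) : ℝ :=
  lam * max (u'' r) 0 + Lam * min (u'' r) 0 +
    ((n : ℝ) - 1) * (lam * max (u' r / r) 0 + Lam * min (u' r / r) 0)

/-- Existence of a radial solution in the ball `B_R` of `−P[w] = |w|^{p−1} w` with `k` nodal
regions and sign `sign` at the origin: `w ∈ C¹([0,R]) ∩ C²((0,R])`, `w'(0) = 0`, `w(R) = 0`,
zeros `0 = r₀ < r₁ < … < r_k = R` and alternating sign on the nodal annuli. -/
def NodalBallSol (p R : ℝ) (k : ℕ) (P : (ℝ → ℝ) → (ℝ → ℝ) → ℝ → ℝ) (sign : ℝ) : Prop :=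
  ∃ (w w' w'' : ℝ → ℝ) (rr : ℕ → ℝ),
    rr 0 = 0 ∧ rr k = R ∧ (∀ j < k, rr j < rr (j + 1)) ∧
    (∀ r ∈ Set.Icc (0 : ℝ) R, HasDerivAt w (w' r) r) ∧
    ContinuousOn w' (Set.Icc (0 : ℝ) R) ∧
    (∀ r ∈ Set.Ioc (0 : ℝ) R, HasDerivAt w' (w'' r) r) ∧
    ContinuousOn w'' (Set.Ioc (0 : ℝ) R) ∧
    w' 0 = 0 ∧ w R = 0 ∧
    (∀ r ∈ Set.Ioo (0 : ℝ) R, -P w' w'' r = |w r| ^ (p - 1) * w r) ∧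
    0 < sign * w 0 ∧
    (∀ j ≤ k, 1 ≤ j → w (rr j) = 0) ∧
    (∀ j < k, ∀ x ∈ Set.Ioo (rr j) (rr (j + 1)), 0 < sign * (-1 : ℝ) ^ j * w x)

/-!
Solved for `u''`, the radial equation reads `u'' = A(u' / r, u)` with `A` nonincreasing in the
first variable. Adding `N u' / r` to both sides, with `N` the Lipschitz constant of `A` in the slope
`q = u' / r`, turns the initial value problem into a fixed point equation for `q`, which is a
contraction for a Gaussian weighted norm. The energy `u' ^ 2 / 2 + G(u)` decreases, which keeps
small solutions small, but `r ^ (2 N)` times the energy increases, so that the zeros of `u` are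
simple.

The solution oscillates. If it were positive for large `r`, then it would decrease there and satisfy
`u'' + ν u' / r ≤ -u ^ p / L` with `ν = ñ - 1`; its flux `m = -r ^ ν u'` would increase, hence
`u ≥ 2 ^ (-ν) m r ^ (1 - ν)` and `m' ≥ c m ^ p r ^ (ν + p - ν p)`, where the last exponent is at
least `-1` exactly when `p (ñ - 2) ≤ ñ`, and such an `m` blows up. So `u` has infinitely many zeros
and changes sign at each of them. The scaling `u ↦ σ ^ (2 / (p - 1)) u(σ r)` moves the `k`-th zero
to `R`, and `u ↦ -u` exchanges the two signs and the maximal and minimal operators.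
-/

open Filter
open scoped Topology NNReal

/-! ### The one-dimensional Pucci function -/

/-- The extremal function `x ↦ a x⁺ - b x⁻`, i.e. the Pucci operator in one variable; the maximal
operator has `b ≤ a` and the minimal one `a ≤ b`. -/
def pucciFun (a b x : ℝ) : ℝ := a * max x 0 + b * min x 0

/-- The radial extremal operator `K(u'') + d K(u' / r)` with `K = pucciFun a b`, in the real
dimension `d + 1`. -/
noncomputable def radialPucci (a b d : ℝ) (u' u'' : ℝ → ℝ) (r : ℝ) : ℝ :=
  pucciFun a b (u'' r) + d * pucciFun a b (u' r / r)

/-- The dimension-like number `ñ = (Λ / λ) (n - 1) + 1` of the radial extremal operator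
`radialPucci a b d`. -/
noncomputable def pucciDim (a b d : ℝ) : ℝ := max a b / min a b * d + 1

/-- The value of `u''` determined by `K(u'') + d K(q) + h = 0`, where `K = pucciFun a b` and `q`
stands for `u' / r`. -/
noncomputable def pucciAccel (a b d q h : ℝ) : ℝ :=
  pucciFun a⁻¹ b⁻¹ (-(d * pucciFun a b q) - h)

section PucciFun

variable {a b : ℝ}

lemma pucciFun_of_nonneg {x : ℝ} (hx : 0 ≤ x) : pucciFun a b x = a * x := by
  simp [pucciFun, hx]

lemma pucciFun_of_nonpos {x : ℝ} (hx : x ≤ 0) : pucciFun a b x = b * x := by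
  simp [pucciFun, hx]

@[simp] lemma pucciFun_zero : pucciFun a b 0 = 0 := by simp [pucciFun]

lemma pucciFun_neg (x : ℝ) : pucciFun a b (-x) = -pucciFun b a x := by
  rcases le_total 0 x with hx | hx
  · rw [pucciFun_of_nonpos (neg_nonpos.2 hx), pucciFun_of_nonneg hx, mul_neg]
  · rw [pucciFun_of_nonneg (neg_nonneg.2 hx), pucciFun_of_nonpos hx, mul_neg]

lemma pucciFun_mul {c : ℝ} (hc : 0 ≤ c) (x : ℝ) : pucciFun a b (c * x) = c * pucciFun a b x := by
  rcases le_total 0 x with hx | hx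
  · rw [pucciFun_of_nonneg (mul_nonneg hc hx), pucciFun_of_nonneg hx, mul_left_comm]
  · rw [pucciFun_of_nonpos (mul_nonpos_of_nonneg_of_nonpos hc hx), pucciFun_of_nonpos hx,
      mul_left_comm]

lemma pucciFun_pucciFun_inv (ha : 0 < a) (hb : 0 < b) (x : ℝ) :
    pucciFun a b (pucciFun a⁻¹ b⁻¹ x) = x := by
  rcases le_total 0 x with hx | hx
  · rw [pucciFun_of_nonneg hx, pucciFun_of_nonneg (by positivity), mul_inv_cancel_left₀ ha.ne']
  · rw [pucciFun_of_nonpos hx, pucciFun_of_nonpos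
      (mul_nonpos_of_nonneg_of_nonpos (inv_pos.2 hb).le hx), mul_inv_cancel_left₀ hb.ne']

lemma continuous_pucciFun (a b : ℝ) : Continuous (pucciFun a b) := by
  unfold pucciFun; fun_prop

lemma monotone_pucciFun (ha : 0 ≤ a) (hb : 0 ≤ b) : Monotone (pucciFun a b) := fun x y hxy => by
  unfold pucciFun; gcongr

lemma pucciFun_sub_le {x y : ℝ} (hxy : x ≤ y) :
    pucciFun a b y - pucciFun a b x ≤ max a b * (y - x) := by
  have hmax : max x 0 ≤ max y 0 := max_le_max_right 0 hxy
  have hmin : min x 0 ≤ min y 0 := min_le_min_right 0 hxy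
  have split (z : ℝ) : max z 0 + min z 0 = z := by rw [max_add_min, add_zero]
  calc pucciFun a b y - pucciFun a b x
      = a * (max y 0 - max x 0) + b * (min y 0 - min x 0) := by unfold pucciFun; ring
    _ ≤ max a b * (max y 0 - max x 0) + max a b * (min y 0 - min x 0) :=
        add_le_add (mul_le_mul_of_nonneg_right (le_max_left a b) (sub_nonneg.2 hmax))
          (mul_le_mul_of_nonneg_right (le_max_right a b) (sub_nonneg.2 hmin))
    _ = max a b * (y - x) := by linear_combination max a b * (split y - split x)

lemma abs_pucciFun_sub_le (ha : 0 ≤ a) (hb : 0 ≤ b) (x y : ℝ) :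
    |pucciFun a b x - pucciFun a b y| ≤ max a b * |x - y| := by
  wlog hxy : y ≤ x generalizing x y
  · rw [abs_sub_comm, abs_sub_comm x]
    exact this y x (le_of_not_ge hxy)
  rw [abs_of_nonneg (sub_nonneg.2 (monotone_pucciFun ha hb hxy)), abs_of_nonneg (sub_nonneg.2 hxy)]
  exact pucciFun_sub_le hxy

end PucciFun

section PucciAccel

variable {a b d : ℝ}

lemma pucciDim_comm (a b d : ℝ) : pucciDim a b d = pucciDim b a d := by
  rw [pucciDim, max_comm, min_comm, pucciDim]

lemma pucciFun_pucciAccel_add (ha : 0 < a) (hb : 0 < b) (d q h : ℝ) :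
    pucciFun a b (pucciAccel a b d q h) + d * pucciFun a b q = -h := by
  rw [pucciAccel, pucciFun_pucciFun_inv ha hb]
  ring

lemma pucciAccel_neg_neg (a b d q h : ℝ) :
    pucciAccel a b d (-q) (-h) = -pucciAccel b a d q h := by
  rw [pucciAccel, pucciAccel, ← pucciFun_neg, pucciFun_neg q]
  ring_nf

lemma pucciAccel_mul_mul {c : ℝ} (hc : 0 ≤ c) (q h : ℝ) :
    pucciAccel a b d (c * q) (c * h) = c * pucciAccel a b d q h := by
  rw [pucciAccel, pucciAccel, ← pucciFun_mul hc, pucciFun_mul hc q]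
  ring_nf

lemma pucciAccel_zero_left (h : ℝ) : pucciAccel a b d 0 h = -pucciFun b⁻¹ a⁻¹ h := by
  simp [pucciAccel, pucciFun_neg]

lemma continuous_pucciAccel (a b d : ℝ) :
    Continuous fun x : ℝ × ℝ => pucciAccel a b d x.1 x.2 :=
  (continuous_pucciFun _ _).comp
    ((((continuous_pucciFun a b).comp continuous_fst).const_mul d).neg.sub continuous_snd)

lemma antitone_pucciAccel (ha : 0 < a) (hb : 0 < b) (hd : 0 ≤ d) (h : ℝ) :
    Antitone fun q => pucciAccel a b d q h := fun q q' hq => by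
  have hslope := mul_le_mul_of_nonneg_left (monotone_pucciFun ha.le hb.le hq) hd
  exact monotone_pucciFun (inv_pos.2 ha).le (inv_pos.2 hb).le (by linarith)

lemma abs_pucciFun_inv_sub_le (ha : 0 < a) (hb : 0 < b) (x y : ℝ) :
    |pucciFun a⁻¹ b⁻¹ x - pucciFun a⁻¹ b⁻¹ y| ≤ (min a b)⁻¹ * |x - y| := by
  refine (abs_pucciFun_sub_le (inv_pos.2 ha).le (inv_pos.2 hb).le x y).trans ?_
  have hmin : 0 < min a b := lt_min ha hb
  gcongr
  exact max_le (inv_anti₀ hmin (min_le_left a b)) (inv_anti₀ hmin (min_le_right a b))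

lemma abs_pucciAccel_sub_le (ha : 0 < a) (hb : 0 < b) (hd : 0 ≤ d) (q q' h : ℝ) :
    |pucciAccel a b d q h - pucciAccel a b d q' h| ≤ (pucciDim a b d - 1) * |q - q'| := by
  have : 0 < min a b := lt_min ha hb
  calc |pucciAccel a b d q h - pucciAccel a b d q' h|
      ≤ (min a b)⁻¹ * |-(d * pucciFun a b q) - h - (-(d * pucciFun a b q') - h)| :=
        abs_pucciFun_inv_sub_le ha hb _ _
    _ = (min a b)⁻¹ * (d * |pucciFun a b q - pucciFun a b q'|) := by
        rw [sub_sub_sub_cancel_right, ← neg_sub', abs_neg, ← mul_sub, abs_mul, abs_of_nonneg hd]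
    _ ≤ (min a b)⁻¹ * (d * (max a b * |q - q'|)) := by
        gcongr
        exact abs_pucciFun_sub_le ha.le hb.le q q'
    _ = (pucciDim a b d - 1) * |q - q'| := by rw [pucciDim]; ring

lemma abs_pucciAccel_sub_le_right (ha : 0 < a) (hb : 0 < b) (q h h' : ℝ) :
    |pucciAccel a b d q h - pucciAccel a b d q h'| ≤ (min a b)⁻¹ * |h - h'| := by
  refine (abs_pucciFun_inv_sub_le ha hb _ _).trans_eq ?_
  rw [sub_sub_sub_cancel_left, abs_sub_comm]

lemma abs_add_mul_sub_le_of_antitone {g : ℝ → ℝ} {N : ℝ} (hg : Antitone g)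
    (hN : ∀ x y, |g x - g y| ≤ N * |x - y|) (x y : ℝ) :
    |(g x + N * x) - (g y + N * y)| ≤ N * |x - y| := by
  wlog hxy : y ≤ x generalizing x y
  · rw [abs_sub_comm, abs_sub_comm x]
    exact this y x (le_of_not_ge hxy)
  have hbound := abs_le.1 (hN x y)
  have hanti := hg hxy
  rw [abs_of_nonneg (sub_nonneg.2 hxy)] at hbound ⊢
  rw [abs_le]
  constructor <;> linarith

lemma abs_pucciAccel_add_mul_sub_le (ha : 0 < a) (hb : 0 < b) (hd : 0 ≤ d) {N : ℝ}
    (hN : pucciDim a b d - 1 ≤ N) (q q' h h' : ℝ) :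
    |(pucciAccel a b d q h + N * q) - (pucciAccel a b d q' h' + N * q')| ≤
      N * |q - q'| + (min a b)⁻¹ * |h - h'| := by
  have hslope := abs_add_mul_sub_le_of_antitone (N := N) (antitone_pucciAccel ha hb hd h)
    (fun x y => (abs_pucciAccel_sub_le ha hb hd x y h).trans (by gcongr)) q q'
  have hforce := abs_pucciAccel_sub_le_right (d := d) ha hb q' h h'
  rw [← add_sub_add_right_eq_sub _ _ (N * q')] at hforce
  exact (abs_sub_le _ _ _).trans (add_le_add hslope hforce)

lemma pucciDim_sub_one_mul_add_pucciAccel_le (ha : 0 < a) (hb : 0 < b) (hd : 0 ≤ d) {q h : ℝ}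
    (hq : q ≤ 0) (hh : 0 ≤ h) :
    (pucciDim a b d - 1) * q + pucciAccel a b d q h ≤ -(h / max a b) := by
  have : 0 < min a b := lt_min ha hb
  have key {c : ℝ} (hc : 0 < c) (hcmax : c ≤ max a b) (hcmin : min a b ≤ c) :
      (pucciDim a b d - 1) * q + c⁻¹ * (-(d * (b * q)) - h) ≤ -(h / max a b) := by
    have hdim : b / c * d ≤ max a b / min a b * d := by gcongr; exact le_max_right a b
    have hslope : max a b / min a b * d * q ≤ b / c * d * q :=
      mul_le_mul_of_nonpos_right hdim hq
    have hforce : h / max a b ≤ h / c := by gcongr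
    calc (pucciDim a b d - 1) * q + c⁻¹ * (-(d * (b * q)) - h)
        = max a b / min a b * d * q - b / c * d * q - h / c := by rw [pucciDim]; ring
      _ ≤ -(h / max a b) := by linarith
  rw [pucciAccel, pucciFun_of_nonpos hq]
  rcases le_total 0 (-(d * (b * q)) - h) with hsign | hsign
  · rw [pucciFun_of_nonneg hsign]
    exact key ha (le_max_left a b) (min_le_left a b)
  · rw [pucciFun_of_nonpos hsign]
    exact key hb (le_max_right a b) (min_le_right a b)

end PucciAccel

/-! ### The radial initial value problem -/

section FixedPoint

variable {X E : Type*} [TopologicalSpace X] [NormedAddCommGroup E] [NormedSpace ℝ E]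
  [CompleteSpace E] {T : (X → E) → X → E} {ω : X → ℝ} {κ : ℝ≥0} {M : ℝ}

lemma exists_continuous_fixedPoint_of_weighted_contraction (hω : Continuous ω)
    (hω₀ : ∀ x, 0 < ω x) (hκ : κ < 1) (hcont : ∀ q, Continuous q → Continuous (T q))
    (hzero : ∀ x, ‖T 0 x‖ ≤ M * ω x)
    (hcontr : ∀ q q', Continuous q → Continuous q' → ∀ D : ℝ,
      (∀ x, ‖q x - q' x‖ ≤ D * ω x) → ∀ x, ‖T q x - T q' x‖ ≤ κ * D * ω x) :
    ∃ q, Continuous q ∧ T q = q := by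
  let weigh (Q : BoundedContinuousFunction X E) (x : X) : E := ω x • Q x
  have weigh_continuous (Q) : Continuous (weigh Q) := hω.smul Q.continuous
  have weigh_zero : weigh 0 = 0 := by ext; simp [weigh]
  have weigh_sub_le (Q Q') (x : X) : ‖weigh Q x - weigh Q' x‖ ≤ dist Q Q' * ω x := by
    rw [← smul_sub, norm_smul, Real.norm_of_nonneg (hω₀ x).le, mul_comm, ← dist_eq_norm]
    exact mul_le_mul_of_nonneg_right (Q.dist_coe_le_dist x) (hω₀ x).le
  have unweigh_le {D : ℝ} {x : X} {y : E} (hy : ‖y‖ ≤ D * ω x) : ‖(ω x)⁻¹ • y‖ ≤ D := by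
    rwa [norm_smul, norm_inv, Real.norm_of_nonneg (hω₀ x).le, inv_mul_le_iff₀ (hω₀ x), mul_comm]
  have contr (Q Q') : ∀ x, ‖T (weigh Q) x - T (weigh Q') x‖ ≤ κ * dist Q Q' * ω x :=
    hcontr _ _ (weigh_continuous Q) (weigh_continuous Q') _ (weigh_sub_le Q Q')
  have bound (Q) (x : X) : ‖(ω x)⁻¹ • T (weigh Q) x‖ ≤ κ * dist Q 0 + M := unweigh_le <| by
    have hdist := contr Q 0 x
    rw [weigh_zero] at hdist
    linarith [norm_le_norm_sub_add (T (weigh Q) x) (T 0 x), hzero x]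
  let Ψ (Q : BoundedContinuousFunction X E) : BoundedContinuousFunction X E :=
    .ofNormedAddCommGroup (fun x => (ω x)⁻¹ • T (weigh Q) x)
      ((hω.inv₀ fun x => (hω₀ x).ne').smul (hcont _ (weigh_continuous Q))) _ (bound Q)
  have hΨ : ContractingWith κ Ψ := by
    refine ⟨hκ, LipschitzWith.of_dist_le_mul fun Q Q' =>
      (BoundedContinuousFunction.dist_le (by positivity)).2 fun x => ?_⟩
    rw [dist_eq_norm]
    change ‖(ω x)⁻¹ • T (weigh Q) x - (ω x)⁻¹ • T (weigh Q') x‖ ≤ _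
    rw [← smul_sub]
    exact unweigh_le (contr Q Q' x)
  obtain ⟨Q, hQ⟩ : ∃ Q, Ψ Q = Q := ⟨_, hΨ.fixedPoint_isFixedPt⟩
  refine ⟨weigh Q, weigh_continuous Q, funext fun x => ?_⟩
  have hQx : (ω x)⁻¹ • T (weigh Q) x = Q x := DFunLike.congr_fun hQ x
  rw [← smul_inv_smul₀ (hω₀ x).ne' (T (weigh Q) x), hQx]

end FixedPoint

section RadialAverage

variable {E : Type*} [NormedAddCommGroup E] [NormedSpace ℝ E] {g h : ℝ → E} {N : ℕ} {r : ℝ}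

/-- The weighted radial mean `∫₀¹ θ ^ N g(r θ) dθ = r ^ (-(N + 1)) ∫₀ʳ s ^ N g(s) ds`. The
parametrization by `θ` keeps it meaningful and continuous at `r = 0`. -/
noncomputable def radialAverage (N : ℕ) (g : ℝ → E) (r : ℝ) : E :=
  ∫ θ in (0 : ℝ)..1, θ ^ N • g (r * θ)

lemma continuous_radialAverage (N : ℕ) (hg : Continuous g) : Continuous (radialAverage N g) :=
  intervalIntegral.continuous_parametric_intervalIntegral_of_continuous' (by fun_prop) _ _

lemma radialAverage_sub (hg : Continuous g) (hh : Continuous h) :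
    radialAverage N (fun s => g s - h s) r = radialAverage N g r - radialAverage N h r := by
  simp only [radialAverage, smul_sub]
  exact intervalIntegral.integral_sub
    (Continuous.intervalIntegrable (by fun_prop) _ _)
    (Continuous.intervalIntegrable (by fun_prop) _ _)

lemma norm_radialAverage_le {G : ℝ → ℝ} (hG : Continuous G)
    (hgG : ∀ θ ∈ Icc (0 : ℝ) 1, ‖g (r * θ)‖ ≤ G θ) :
    ‖radialAverage N g r‖ ≤ ∫ θ in (0 : ℝ)..1, θ ^ N * G θ := by
  refine intervalIntegral.norm_integral_le_of_norm_le zero_le_one (.of_forall fun θ hθ => ?_)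
    (Continuous.intervalIntegrable (by fun_prop) _ _)
  have hθN : 0 ≤ θ ^ N := pow_nonneg hθ.1.le N
  rw [norm_smul, Real.norm_of_nonneg hθN]
  exact mul_le_mul_of_nonneg_left (hgG θ (Ioc_subset_Icc_self hθ)) hθN

lemma norm_radialAverage_le_const {M : ℝ} (hg : ∀ θ ∈ Icc (0 : ℝ) 1, ‖g (r * θ)‖ ≤ M) :
    ‖radialAverage N g r‖ ≤ M / (N + 1) := by
  refine (norm_radialAverage_le continuous_const hg).trans_eq ?_
  rw [intervalIntegral.integral_mul_const, integral_pow, one_pow, zero_pow N.succ_ne_zero, sub_zero,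
    one_div_mul_eq_div]

lemma sq_mul_norm_radialAverage_one_le {D β : ℝ} (hβ : 0 < β) (hD : 0 ≤ D)
    (hg : ∀ s, ‖g s‖ ≤ D * exp (β * s ^ 2)) :
    r ^ 2 * ‖radialAverage 1 g r‖ ≤ D / (2 * β) * exp (β * r ^ 2) := by
  have antideriv (θ : ℝ) : HasDerivAt (fun θ => D / (2 * β) * exp (β * (r * θ) ^ 2))
      (r ^ 2 * (θ ^ 1 * (D * exp (β * (r * θ) ^ 2)))) θ := by
    refine (((((hasDerivAt_id θ).const_mul r).pow 2).const_mul β).exp.const_mul _).congr_deriv ?_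
    simp only [id, Pi.pow_apply]
    field_simp
    ring
  calc r ^ 2 * ‖radialAverage 1 g r‖
      ≤ r ^ 2 * ∫ θ in (0 : ℝ)..1, θ ^ 1 * (D * exp (β * (r * θ) ^ 2)) := by
        gcongr
        exact norm_radialAverage_le (by fun_prop) fun θ _ => hg _
    _ = D / (2 * β) * exp (β * r ^ 2) - D / (2 * β) := by
        rw [← intervalIntegral.integral_const_mul,
          intervalIntegral.integral_eq_sub_of_hasDerivAt (fun θ _ => antideriv θ)
            (Continuous.intervalIntegrable (by fun_prop) _ _)]
        simp
    _ ≤ D / (2 * β) * exp (β * r ^ 2) := sub_le_self _ (by positivity)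

lemma pow_succ_smul_radialAverage (N : ℕ) (g : ℝ → E) (r : ℝ) :
    r ^ (N + 1) • radialAverage N g r = ∫ s in (0 : ℝ)..r, s ^ N • g s := by
  have hsubst := intervalIntegral.smul_integral_comp_mul_left (a := 0) (b := 1)
    (fun s => s ^ N • g s) r
  simp only [mul_zero, mul_one, mul_pow, mul_smul] at hsubst
  rw [← hsubst, intervalIntegral.integral_smul, pow_succ', mul_smul, radialAverage]

variable [CompleteSpace E]

lemma hasDerivAt_pow_succ_smul_radialAverage (N : ℕ) (hg : Continuous g) (r : ℝ) :
    HasDerivAt (fun s => s ^ (N + 1) • radialAverage N g s) (r ^ N • g r) r := by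
  simp only [pow_succ_smul_radialAverage]
  exact (((continuous_pow N).smul hg).integral_hasStrictDerivAt 0 r).hasDerivAt

lemma hasDerivAt_smul_radialAverage (N : ℕ) (hg : Continuous g) (hr : r ≠ 0) :
    HasDerivAt (fun s => s • radialAverage N g s) (g r - (N : ℝ) • radialAverage N g r) r := by
  have hquot := ((hasDerivAt_pow N r).inv (pow_ne_zero N hr)).smul
    (hasDerivAt_pow_succ_smul_radialAverage N hg r)
  refine (hquot.congr_of_eventuallyEq ?_).congr_deriv ?_
  · filter_upwards [isOpen_ne.mem_nhds hr] with s hs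
    rw [Pi.smul_apply', Pi.inv_apply, pow_succ, mul_smul, inv_smul_smul₀ (pow_ne_zero N hs)]
  · rw [Pi.inv_apply, inv_smul_smul₀ (pow_ne_zero N hr), smul_smul, sub_eq_add_neg, ← neg_smul]
    congr 2
    rcases N with _ | N
    · simp
    · rw [Nat.add_sub_cancel]
      field_simp
      ring

end RadialAverage

lemma continuous_of_norm_sub_le_add {F F' G : Type*} [SeminormedAddCommGroup F]
    [SeminormedAddCommGroup F'] [SeminormedAddCommGroup G] {S : F → F' → G} {K L : ℝ≥0}
    (hS : ∀ q q' x x', ‖S q x - S q' x'‖ ≤ K * ‖q - q'‖ + L * ‖x - x'‖) :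
    Continuous fun z : F × F' => S z.1 z.2 := by
  refine (LipschitzWith.of_dist_le_mul (K := K + L) fun z w => ?_).continuous
  rw [dist_eq_norm, NNReal.coe_add, add_mul]
  refine (hS _ _ _ _).trans ?_
  rw [← dist_eq_norm, ← dist_eq_norm]
  gcongr
  exacts [le_max_left _ _, le_max_right _ _]

section RadialSolution

variable {E : Type*} [NormedAddCommGroup E] [NormedSpace ℝ E] {A : E → E → E}

/-- `u`, with derivative `v`, solves the radial initial value problem `u'' = A(u' / r, u)` for
`r > 0`, `u'(0) = 0`. -/
structure IsRadialSolution (A : E → E → E) (u v : ℝ → E) : Prop where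
  hasDerivAt : ∀ r, HasDerivAt u (v r) r
  continuous_deriv : Continuous v
  deriv_zero : v 0 = 0
  hasDerivAt_deriv : ∀ r, 0 < r → HasDerivAt v (A (r⁻¹ • v r) (u r)) r

/-- Integrating a slope `q = u' / r` from the initial value `x₀`: the function
`x₀ + ∫₀ʳ s q(s) ds`. -/
noncomputable def radialPrimitive (x₀ : E) (q : ℝ → E) (r : ℝ) : E :=
  x₀ + r ^ 2 • radialAverage 1 q r

lemma continuous_radialPrimitive (x₀ : E) {q : ℝ → E} (hq : Continuous q) :
    Continuous (radialPrimitive x₀ q) :=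
  continuous_const.add ((continuous_pow 2).smul (continuous_radialAverage 1 hq))

lemma norm_radialPrimitive_sub_le (x₀ : E) {q q' : ℝ → E} (hq : Continuous q)
    (hq' : Continuous q') {D β : ℝ} (hβ : 0 < β) (hD : ∀ s, ‖q s - q' s‖ ≤ D * exp (β * s ^ 2))
    (r : ℝ) :
    ‖radialPrimitive x₀ q r - radialPrimitive x₀ q' r‖ ≤ D / (2 * β) * exp (β * r ^ 2) := by
  have hD₀ : 0 ≤ D := nonneg_of_mul_nonneg_left ((norm_nonneg _).trans (hD 0)) (exp_pos _)
  rw [radialPrimitive, radialPrimitive, add_sub_add_left_eq_sub, ← smul_sub,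
    ← radialAverage_sub hq hq', norm_smul, Real.norm_of_nonneg (sq_nonneg r)]
  exact sq_mul_norm_radialAverage_one_le hβ hD₀ hD

section Forcing

variable {S : E → E → E} {N : ℕ} {C : ℝ≥0}

lemma norm_radialAverage_comp_radialPrimitive_sub_le
    (hS : ∀ q q' x x', ‖S q x - S q' x'‖ ≤ N * ‖q - q'‖ + C * ‖x - x'‖) (x₀ : E) {β : ℝ}
    (hβ : 0 < β) (hCβ : C ≤ β) {q q' : ℝ → E} (hq : Continuous q) (hq' : Continuous q') {D : ℝ}
    (hD : ∀ s, ‖q s - q' s‖ ≤ D * exp (β * s ^ 2)) (r : ℝ) :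
    ‖radialAverage N (fun s => S (q s) (radialPrimitive x₀ q s)) r -
      radialAverage N (fun s => S (q' s) (radialPrimitive x₀ q' s)) r‖ ≤
      (N + 1 / 2) / (N + 1) * D * exp (β * r ^ 2) := by
  have hD₀ : 0 ≤ D := nonneg_of_mul_nonneg_left ((norm_nonneg _).trans (hD 0)) (exp_pos _)
  have force_continuous {q : ℝ → E} (hq : Continuous q) :
      Continuous fun s => S (q s) (radialPrimitive x₀ q s) :=
    (continuous_of_norm_sub_le_add (K := N) hS).comp (hq.prodMk (continuous_radialPrimitive x₀ hq))
  rw [← radialAverage_sub (force_continuous hq) (force_continuous hq')]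
  refine (norm_radialAverage_le_const (M := (N + 1 / 2) * D * exp (β * r ^ 2))
    fun θ hθ => ?_).trans_eq (by ring)
  calc ‖S (q (r * θ)) (radialPrimitive x₀ q (r * θ)) -
        S (q' (r * θ)) (radialPrimitive x₀ q' (r * θ))‖
      ≤ N * (D * exp (β * (r * θ) ^ 2)) + C * (D / (2 * β) * exp (β * (r * θ) ^ 2)) := by
        refine (hS _ _ _ _).trans ?_
        gcongr
        exacts [hD _, norm_radialPrimitive_sub_le x₀ hq hq' hβ hD _]
    _ = (N + C / β / 2) * D * exp (β * (r ^ 2 * θ ^ 2)) := by rw [mul_pow]; ring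
    _ ≤ (N + 1 / 2) * D * exp (β * r ^ 2) := by
        gcongr
        · exact (div_le_one hβ).2 hCβ
        · exact mul_le_of_le_one_right (sq_nonneg r) (pow_le_one₀ hθ.1 hθ.2)

end Forcing

variable [CompleteSpace E]

/-- In terms of the slope `q = u' / r`, the equation `u'' + N u' / r = S(u' / r, u)` says that `q`
is the radial average of `S(q, u)`. -/
lemma exists_radialAverage_comp_radialPrimitive_eq {S : E → E → E} {N : ℕ} {C : ℝ≥0}
    (hS : ∀ q q' x x', ‖S q x - S q' x'‖ ≤ N * ‖q - q'‖ + C * ‖x - x'‖) (x₀ : E) :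
    ∃ q : ℝ → E, Continuous q ∧ Continuous (fun s => S (q s) (radialPrimitive x₀ q s)) ∧
      radialAverage N (fun s => S (q s) (radialPrimitive x₀ q s)) = q := by
  let β : ℝ := C + 1
  let κ : ℝ≥0 := (N + 1 / 2) / (N + 1)
  have hβ : 0 < β := by positivity
  have hκ : κ < 1 :=
    (div_lt_one (by positivity)).2 (by gcongr; exact NNReal.half_lt_self one_ne_zero)
  have force_continuous (q : ℝ → E) (hq : Continuous q) :
      Continuous fun s => S (q s) (radialPrimitive x₀ q s) :=
    (continuous_of_norm_sub_le_add (K := N) hS).comp (hq.prodMk (continuous_radialPrimitive x₀ hq))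
  have zero_le (r : ℝ) :
      ‖radialAverage N (fun s => S 0 (radialPrimitive x₀ 0 s)) r‖ ≤
        ‖S 0 x₀‖ * exp (β * r ^ 2) := by
    have hbound : ‖radialAverage N (fun _ => S 0 x₀) r‖ ≤ ‖S 0 x₀‖ / (N + 1) :=
      norm_radialAverage_le_const fun _ _ => le_rfl
    simp only [radialPrimitive, radialAverage, Pi.zero_apply, smul_zero,
      intervalIntegral.integral_zero, add_zero] at hbound ⊢
    exact hbound.trans ((div_le_self (norm_nonneg _) (by simp)).trans
      (le_mul_of_one_le_right (norm_nonneg _) (one_le_exp (by positivity))))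
  obtain ⟨q, hq, hfix⟩ := exists_continuous_fixedPoint_of_weighted_contraction
    (T := fun q => radialAverage N fun s => S (q s) (radialPrimitive x₀ q s)) (κ := κ)
    (ω := fun r => exp (β * r ^ 2)) (by fun_prop) (fun _ => exp_pos _) hκ
    (fun q hq => continuous_radialAverage N (force_continuous q hq)) zero_le
    fun q q' hq hq' D hD r => by
      simpa [κ] using norm_radialAverage_comp_radialPrimitive_sub_le hS x₀ hβ
        (le_add_of_nonneg_right zero_le_one) hq hq' hD r
  exact ⟨q, hq, force_continuous q hq, hfix⟩

theorem exists_isRadialSolution {N : ℕ} {C : ℝ≥0}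
    (hA : ∀ q q' x x', ‖(A q x + (N : ℝ) • q) - (A q' x' + (N : ℝ) • q')‖ ≤
      N * ‖q - q'‖ + C * ‖x - x'‖) (x₀ : E) :
    ∃ u v, IsRadialSolution A u v ∧ u 0 = x₀ := by
  obtain ⟨q, hq, hforce, hfix⟩ := exists_radialAverage_comp_radialPrimitive_eq hA x₀
  refine ⟨radialPrimitive x₀ q, fun r => r • q r, ⟨fun r => ?_, by fun_prop, zero_smul _ _,
    fun r hr => ?_⟩, by simp [radialPrimitive]⟩
  · have hderiv := (hasDerivAt_pow_succ_smul_radialAverage 1 hq r).const_add x₀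
    rwa [pow_one] at hderiv
  · have hderiv := hasDerivAt_smul_radialAverage N hforce hr.ne'
    rw [hfix, add_sub_cancel_right] at hderiv
    rwa [inv_smul_smul₀ hr.ne']

end RadialSolution

/-! ### Energy -/

section Potential

variable {g : ℝ → ℝ}

/-- The potential energy of the restoring force `-g`. -/
noncomputable def potential (g : ℝ → ℝ) (x : ℝ) : ℝ := ∫ s in (0 : ℝ)..x, g s

@[simp] lemma potential_zero : potential g 0 = 0 := intervalIntegral.integral_same

lemma hasDerivAt_potential (hg : Continuous g) (x : ℝ) : HasDerivAt (potential g) (g x) x :=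
  (hg.integral_hasStrictDerivAt 0 x).hasDerivAt

lemma continuous_potential (hg : Continuous g) : Continuous (potential g) :=
  continuous_iff_continuousAt.2 fun x => (hasDerivAt_potential hg x).continuousAt

lemma strictMonoOn_potential (hg : Continuous g) (hpos : ∀ x, x ≠ 0 → 0 < x * g x) :
    StrictMonoOn (potential g) (Ici 0) := by
  refine strictMonoOn_of_deriv_pos (convex_Ici 0) (continuous_potential hg).continuousOn
    fun x hx => ?_
  rw [interior_Ici, mem_Ioi] at hx
  rw [(hasDerivAt_potential hg x).deriv]
  exact (pos_iff_pos_of_mul_pos (hpos x hx.ne')).1 hx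

lemma strictAntiOn_potential (hg : Continuous g) (hpos : ∀ x, x ≠ 0 → 0 < x * g x) :
    StrictAntiOn (potential g) (Iic 0) := by
  refine strictAntiOn_of_deriv_neg (convex_Iic 0) (continuous_potential hg).continuousOn
    fun x hx => ?_
  rw [interior_Iic, mem_Iio] at hx
  rw [(hasDerivAt_potential hg x).deriv]
  exact (neg_iff_neg_of_mul_pos (hpos x hx.ne)).1 hx

lemma potential_pos (hg : Continuous g) (hpos : ∀ x, x ≠ 0 → 0 < x * g x) {x : ℝ} (hx : x ≠ 0) :
    0 < potential g x := by
  rw [← potential_zero (g := g)]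
  rcases hx.lt_or_gt with hx | hx
  · exact strictAntiOn_potential hg hpos hx.le self_mem_Iic hx
  · exact strictMonoOn_potential hg hpos self_mem_Ici hx.le hx

lemma exists_abs_le_of_potential_le (hg : Continuous g) (hpos : ∀ x, x ≠ 0 → 0 < x * g x)
    {ε : ℝ} (hε : 0 < ε) :
    ∃ δ, 0 < δ ∧ ∀ x, potential g x ≤ potential g δ → |x| ≤ ε := by
  have hbarrier : potential g 0 < min (potential g ε) (potential g (-ε)) := by
    rw [potential_zero]
    exact lt_min (potential_pos hg hpos hε.ne') (potential_pos hg hpos (neg_ne_zero.2 hε.ne'))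
  obtain ⟨δ, hδ, hδ₀⟩ := ((((continuous_potential hg).continuousAt.eventually_lt_const
    hbarrier).filter_mono nhdsWithin_le_nhds).and (self_mem_nhdsWithin (s := Ioi 0))).exists
  refine ⟨δ, hδ₀, fun x hx => abs_le.2 ⟨?_, ?_⟩⟩
  · by_contra! hxε
    exact (hx.trans_lt (hδ.trans_le (min_le_right _ _))).not_gt
      (strictAntiOn_potential hg hpos (hxε.trans (neg_lt_zero.2 hε)).le
        (neg_lt_zero.2 hε).le hxε)
  · by_contra! hxε
    exact (hx.trans_lt (hδ.trans_le (min_le_left _ _))).not_gt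
      (strictMonoOn_potential hg hpos hε.le (hε.trans hxε).le hxε)

end Potential

namespace IsRadialSolution

variable {A : ℝ → ℝ → ℝ} {u v : ℝ → ℝ} {r : ℝ}

/-- The mechanical energy of a radial solution, the potential being that of the force
`x ↦ A(0, x)` acting on a particle at rest. -/
noncomputable def energy (A : ℝ → ℝ → ℝ) (u v : ℝ → ℝ) (r : ℝ) : ℝ :=
  v r ^ 2 / 2 + potential (fun x => -A 0 x) (u r)

lemma continuous (h : IsRadialSolution A u v) : Continuous u :=
  continuous_iff_continuousAt.2 fun r => (h.hasDerivAt r).continuousAt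

lemma continuous_energy (h : IsRadialSolution A u v) (hA : Continuous (A 0)) :
    Continuous (energy A u v) :=
  ((h.continuous_deriv.pow 2).div_const 2).add ((continuous_potential hA.neg).comp h.continuous)

lemma hasDerivAt_energy (h : IsRadialSolution A u v) (hA : Continuous (A 0)) (hr : 0 < r) :
    HasDerivAt (energy A u v) (v r * (A (r⁻¹ • v r) (u r) - A 0 (u r))) r := by
  refine ((((h.hasDerivAt_deriv r hr).pow 2).div_const 2).add
    ((hasDerivAt_potential hA.neg (u r)).comp r (h.hasDerivAt r))).congr_deriv ?_
  simp only [Pi.neg_apply]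
  ring

lemma antitoneOn_energy (h : IsRadialSolution A u v) (hA : Continuous (A 0))
    (hanti : ∀ x, Antitone fun q => A q x) : AntitoneOn (energy A u v) (Ici 0) := by
  refine antitoneOn_of_hasDerivWithinAt_nonpos (convex_Ici 0) (h.continuous_energy hA).continuousOn
    (fun r hr => (h.hasDerivAt_energy hA (by simpa using hr)).hasDerivWithinAt) fun r hr => ?_
  replace hr : 0 < r := by simpa using hr
  rcases le_total 0 (v r) with hv | hv
  · exact mul_nonpos_of_nonneg_of_nonpos hv
      (sub_nonpos.2 (hanti (u r) (smul_nonneg (inv_nonneg.2 hr.le) hv)))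
  · exact mul_nonpos_of_nonpos_of_nonneg hv
      (sub_nonneg.2 (hanti (u r) (smul_nonpos_of_nonneg_of_nonpos (inv_nonneg.2 hr.le) hv)))

lemma potential_le (h : IsRadialSolution A u v) (hA : Continuous (A 0))
    (hanti : ∀ x, Antitone fun q => A q x) (hr : 0 ≤ r) :
    potential (fun x => -A 0 x) (u r) ≤ potential (fun x => -A 0 x) (u 0) :=
  calc potential (fun x => -A 0 x) (u r)
      ≤ energy A u v r := le_add_of_nonneg_left (by positivity)
    _ ≤ energy A u v 0 := h.antitoneOn_energy hA hanti self_mem_Ici hr hr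
    _ = potential (fun x => -A 0 x) (u 0) := by simp [energy, h.deriv_zero]

lemma kinetic_le_energy (hA : Continuous (A 0)) (hwell : ∀ x, x ≠ 0 → x * A 0 x < 0) :
    v r ^ 2 / 2 ≤ energy A u v r := by
  refine le_add_of_nonneg_right ?_
  rcases eq_or_ne (u r) 0 with hur | hur
  · rw [hur, potential_zero]
  · exact (potential_pos hA.neg (fun x hx => by simpa using hwell x hx) hur).le

lemma monotoneOn_rpow_mul_energy (h : IsRadialSolution A u v) (hA : Continuous (A 0))
    (hwell : ∀ x, x ≠ 0 → x * A 0 x < 0) {N : ℝ} (hN : ∀ q x, |A q x - A 0 x| ≤ N * |q|) :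
    MonotoneOn (fun r => r ^ (2 * N) * energy A u v r) (Ioi 0) := by
  have hN₀ : 0 ≤ N := by simpa using (abs_nonneg _).trans (hN 1 0)
  have hderiv {r : ℝ} (hr : 0 < r) :=
    (Real.hasDerivAt_rpow_const (p := 2 * N) (Or.inl hr.ne')).mul (h.hasDerivAt_energy hA hr)
  refine monotoneOn_of_hasDerivWithinAt_nonneg (convex_Ioi 0)
    (fun r hr => (hderiv hr).continuousAt.continuousWithinAt)
    (fun r hr => (hderiv (interior_subset hr)).hasDerivWithinAt) fun r hr => ?_
  replace hr : 0 < r := interior_subset hr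
  have hdissip : |v r * (A (r⁻¹ • v r) (u r) - A 0 (u r))| ≤ 2 * N / r * energy A u v r :=
    calc |v r * (A (r⁻¹ • v r) (u r) - A 0 (u r))|
        ≤ |v r| * (N * |r⁻¹ • v r|) := by
          rw [abs_mul]
          exact mul_le_mul_of_nonneg_left (hN _ _) (abs_nonneg _)
      _ = 2 * N / r * (v r ^ 2 / 2) := by
          rw [smul_eq_mul, abs_mul, abs_inv, abs_of_pos hr, ← sq_abs (v r)]
          ring
      _ ≤ 2 * N / r * energy A u v r := by
          gcongr
          exact kinetic_le_energy hA hwell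
  rw [Real.rpow_sub_one hr.ne']
  calc (0 : ℝ) ≤ r ^ (2 * N) * (2 * N / r * energy A u v r +
        v r * (A (r⁻¹ • v r) (u r) - A 0 (u r))) :=
        mul_nonneg (rpow_nonneg hr.le _) (by linarith [(abs_le.1 hdissip).1])
    _ = _ := by ring

lemma energy_pos (h : IsRadialSolution A u v) (hA : Continuous (A 0))
    (hwell : ∀ x, x ≠ 0 → x * A 0 x < 0) {N : ℝ} (hN : ∀ q x, |A q x - A 0 x| ≤ N * |q|)
    (hu₀ : u 0 ≠ 0) (hr : 0 < r) : 0 < energy A u v r := by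
  have henergy₀ : 0 < energy A u v 0 :=
    add_pos_of_nonneg_of_pos (by positivity)
      (potential_pos hA.neg (fun x hx => by simpa using hwell x hx) hu₀)
  obtain ⟨s, hs, hs₀, hsr⟩ := ((((h.continuous_energy hA).continuousAt.eventually_const_lt
    henergy₀).filter_mono nhdsWithin_le_nhds).and (Ioo_mem_nhdsGT hr)).exists
  have hmono := h.monotoneOn_rpow_mul_energy hA hwell hN hs₀ hr hsr.le
  exact pos_of_mul_pos_right ((mul_pos (rpow_pos_of_pos hs₀ _) hs).trans_le hmono)
    (rpow_nonneg hr.le _)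

lemma deriv_ne_zero (h : IsRadialSolution A u v) (hA : Continuous (A 0))
    (hwell : ∀ x, x ≠ 0 → x * A 0 x < 0) {N : ℝ} (hN : ∀ q x, |A q x - A 0 x| ≤ N * |q|)
    (hu₀ : u 0 ≠ 0) (hr : 0 < r) (hur : u r = 0) : v r ≠ 0 := fun hvr => by
  simpa [energy, hur, hvr] using h.energy_pos hA hwell hN hu₀ hr

end IsRadialSolution

lemma mul_comp_projIcc_neg {g : ℝ → ℝ} {M : ℝ} (hM : 0 < M) (hg : ∀ x, x ≠ 0 → x * g x < 0)
    {x : ℝ} (hx : x ≠ 0) : x * g (projIcc (-M) M (neg_le_self hM.le) x) < 0 := by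
  rw [coe_projIcc]
  rcases hx.lt_or_gt with hx | hx
  · have hclamp : max (-M) (min M x) < 0 := max_lt (neg_lt_zero.2 hM) (min_lt_of_right_lt hx)
    exact mul_neg_of_neg_of_pos hx ((neg_iff_pos_of_mul_neg (hg _ hclamp.ne)).1 hclamp)
  · have hclamp : 0 < max (-M) (min M x) := lt_max_of_lt_right (lt_min hM hx)
    exact mul_neg_of_pos_of_neg hx ((pos_iff_neg_of_mul_neg (hg _ hclamp.ne')).1 hclamp)

theorem exists_isRadialSolution_pos {A : ℝ → ℝ → ℝ} {N : ℕ} {C : ℝ≥0} {M : ℝ} (hM : 0 < M)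
    (hLip : ∀ q q', ∀ x ∈ Icc (-M) M, ∀ x' ∈ Icc (-M) M,
      |(A q x + N * q) - (A q' x' + N * q')| ≤ N * |q - q'| + C * |x - x'|)
    (hanti : ∀ x, Antitone fun q => A q x) (hwell : ∀ x, x ≠ 0 → x * A 0 x < 0) :
    ∃ u v, IsRadialSolution A u v ∧ 0 < u 0 := by
  let clamp (x : ℝ) : ℝ := projIcc (-M) M (neg_le_self hM.le) x
  let B (q x : ℝ) : ℝ := A q (clamp x)
  have hB (q q' x x' : ℝ) :
      ‖(B q x + (N : ℝ) • q) - (B q' x' + (N : ℝ) • q')‖ ≤ N * ‖q - q'‖ + C * ‖x - x'‖ := by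
    refine (hLip q q' _ (Subtype.coe_prop _) _ (Subtype.coe_prop _)).trans ?_
    exact add_le_add_right (mul_le_mul_of_nonneg_left
      (abs_projIcc_sub_projIcc (neg_le_self hM.le)) C.coe_nonneg) _
  have hB_continuous : Continuous (B 0) := by
    refine (LipschitzWith.of_dist_le_mul (K := C) fun x y => ?_).continuous
    simpa [dist_eq_norm] using hB 0 0 x y
  have hB_well (x : ℝ) (hx : x ≠ 0) : x * B 0 x < 0 := mul_comp_projIcc_neg hM hwell hx
  obtain ⟨δ, hδ, hsmall⟩ := exists_abs_le_of_potential_le hB_continuous.neg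
    (fun x hx => by simpa using hB_well x hx) hM
  obtain ⟨u, v, h, hu₀⟩ := exists_isRadialSolution hB δ
  refine ⟨u, v, ⟨h.hasDerivAt, h.continuous_deriv, h.deriv_zero, fun r hr => ?_⟩, hu₀ ▸ hδ⟩
  have hur : u r ∈ Icc (-M) M := abs_le.1 <| hsmall (u r) <| hu₀ ▸
    h.potential_le hB_continuous (fun x => hanti (clamp x)) hr.le
  simpa [B, clamp, projIcc_of_mem _ hur] using h.hasDerivAt_deriv r hr

/-! ### The Lane–Emden equation -/

/-- The odd power nonlinearity `|x| ^ (p - 1) x`. -/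
noncomputable def oddPow (p x : ℝ) : ℝ := |x| ^ (p - 1) * x

section OddPow

variable {p : ℝ}

lemma oddPow_of_pos {x : ℝ} (hx : 0 < x) : oddPow p x = x ^ p := by
  rw [oddPow, abs_of_pos hx, Real.rpow_sub_one hx.ne', div_mul_cancel₀ _ hx.ne']

lemma oddPow_neg (p x : ℝ) : oddPow p (-x) = -oddPow p x := by
  rw [oddPow, oddPow, abs_neg, mul_neg]

lemma oddPow_mul {c : ℝ} (hc : 0 ≤ c) (p x : ℝ) :
    oddPow p (c * x) = c ^ (p - 1) * c * oddPow p x := by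
  rw [oddPow, oddPow, abs_mul, abs_of_nonneg hc, Real.mul_rpow hc (abs_nonneg x)]
  ring

lemma hasDerivAt_oddPow (hp : 1 < p) (x : ℝ) : HasDerivAt (oddPow p) (p * |x| ^ (p - 1)) x := by
  rcases eq_or_ne x 0 with rfl | hx
  · rw [hasDerivAt_iff_tendsto_slope]
    have hpow : ContinuousAt (fun x : ℝ => |x| ^ (p - 1)) 0 :=
      continuous_abs.continuousAt.rpow_const (Or.inr (by linarith))
    have hlim := hpow.tendsto.mono_left (nhdsWithin_le_nhds (s := {0}ᶜ))
    rw [abs_zero, Real.zero_rpow (by linarith)] at hlim ⊢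
    rw [mul_zero]
    refine hlim.congr' ?_
    filter_upwards [self_mem_nhdsWithin] with y hy
    rw [slope_def_field, oddPow, oddPow, mul_zero, sub_zero, sub_zero, mul_div_cancel_right₀ _ hy]
  · refine (((hasDerivAt_abs hx).rpow_const (Or.inl (abs_ne_zero.2 hx))).mul
      (hasDerivAt_id x)).congr_deriv ?_
    rw [Real.rpow_sub_one (abs_ne_zero.2 hx) (p - 1), id, mul_one]
    have hsign := sign_mul_self x
    field_simp
    linear_combination (p - 1) * hsign

lemma continuous_oddPow (hp : 1 < p) : Continuous (oddPow p) :=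
  continuous_iff_continuousAt.2 fun x => (hasDerivAt_oddPow hp x).continuousAt

lemma abs_oddPow_sub_le (hp : 1 < p) {x y : ℝ} (hx : x ∈ Icc (-1) 1) (hy : y ∈ Icc (-1) 1) :
    |oddPow p x - oddPow p y| ≤ p * |x - y| := by
  refine (convex_Icc (-1 : ℝ) 1).norm_image_sub_le_of_norm_hasDerivWithin_le
    (fun x _ => (hasDerivAt_oddPow hp x).hasDerivWithinAt) (fun x hx => ?_) hy hx
  rw [norm_mul, Real.norm_of_nonneg (by linarith), Real.norm_of_nonneg (by positivity)]
  exact mul_le_of_le_one_right (by linarith)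
    (Real.rpow_le_one (abs_nonneg x) (abs_le.2 hx) (by linarith))

end OddPow

/-- The right-hand side of the radial Lane–Emden equation `-P[u] = |u| ^ (p - 1) u` solved for
`u''`, where `P = radialPucci a b d` and `q` stands for `u' / r`. -/
noncomputable def laneEmdenAccel (a b d p q x : ℝ) : ℝ := pucciAccel a b d q (oddPow p x)

section LaneEmden

variable {a b d p : ℝ} {u v : ℝ → ℝ}

lemma laneEmdenAccel_neg_neg (a b d p q x : ℝ) :
    laneEmdenAccel a b d p (-q) (-x) = -laneEmdenAccel b a d p q x := by
  rw [laneEmdenAccel, laneEmdenAccel, oddPow_neg, pucciAccel_neg_neg]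

lemma laneEmdenAccel_zero_of_pos {x : ℝ} (hx : 0 < x) :
    laneEmdenAccel a b d p 0 x = -(x ^ p / b) := by
  rw [laneEmdenAccel, oddPow_of_pos hx, pucciAccel_zero_left,
    pucciFun_of_nonneg (rpow_nonneg hx.le p), inv_mul_eq_div]

lemma mul_laneEmdenAccel_zero_neg (ha : 0 < a) (hb : 0 < b) {x : ℝ} (hx : x ≠ 0) :
    x * laneEmdenAccel a b d p 0 x < 0 := by
  wlog hpos : 0 < x generalizing a b x
  · have hneg := this hb ha (neg_ne_zero.2 hx) (neg_pos.2 (lt_of_le_of_ne (not_lt.1 hpos) hx))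
    rwa [← neg_zero (G := ℝ), laneEmdenAccel_neg_neg, neg_mul_neg, neg_zero] at hneg
  rw [laneEmdenAccel_zero_of_pos hpos]
  exact mul_neg_of_pos_of_neg hpos (neg_neg_of_pos (by positivity))

lemma continuous_laneEmdenAccel (hp : 1 < p) :
    Continuous fun z : ℝ × ℝ => laneEmdenAccel a b d p z.1 z.2 :=
  (continuous_pucciAccel a b d).comp
    (continuous_fst.prodMk ((continuous_oddPow hp).comp continuous_snd))

lemma antitone_laneEmdenAccel (ha : 0 < a) (hb : 0 < b) (hd : 0 ≤ d) (x : ℝ) :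
    Antitone fun q => laneEmdenAccel a b d p q x :=
  antitone_pucciAccel ha hb hd _

theorem exists_isRadialSolution_laneEmdenAccel (ha : 0 < a) (hb : 0 < b) (hd : 0 ≤ d)
    (hp : 1 < p) : ∃ u v, IsRadialSolution (laneEmdenAccel a b d p) u v ∧ 0 < u 0 := by
  obtain ⟨N, hN⟩ := exists_nat_ge (pucciDim a b d - 1)
  have : 0 < min a b := lt_min ha hb
  refine exists_isRadialSolution_pos (N := N) (C := ((min a b)⁻¹ * p).toNNReal) one_pos
    (fun q q' x hx x' hx' => ?_) (antitone_laneEmdenAccel ha hb hd)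
    fun x hx => mul_laneEmdenAccel_zero_neg ha hb hx
  refine (abs_pucciAccel_add_mul_sub_le ha hb hd hN q q' _ _).trans ?_
  rw [Real.coe_toNNReal _ (by positivity), mul_assoc _ p]
  gcongr
  exact abs_oddPow_sub_le hp hx hx'

namespace IsRadialSolution

lemma neg (h : IsRadialSolution (laneEmdenAccel a b d p) u v) :
    IsRadialSolution (laneEmdenAccel b a d p) (-u) (-v) where
  hasDerivAt r := (h.hasDerivAt r).neg
  continuous_deriv := h.continuous_deriv.neg
  deriv_zero := by simp [h.deriv_zero]
  hasDerivAt_deriv r hr := by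
    simpa [← laneEmdenAccel_neg_neg] using (h.hasDerivAt_deriv r hr).neg

lemma deriv_ne_zero_of_laneEmdenAccel (h : IsRadialSolution (laneEmdenAccel a b d p) u v)
    (ha : 0 < a) (hb : 0 < b) (hd : 0 ≤ d) (hp : 1 < p) (hu₀ : u 0 ≠ 0) {r : ℝ} (hr : 0 < r)
    (hur : u r = 0) : v r ≠ 0 := by
  refine h.deriv_ne_zero ((continuous_laneEmdenAccel hp).comp (Continuous.prodMk_right 0))
    (fun x hx => mul_laneEmdenAccel_zero_neg ha hb hx) (N := pucciDim a b d - 1) (fun q x => ?_)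
    hu₀ hr hur
  simpa [laneEmdenAccel] using abs_pucciAccel_sub_le ha hb hd q 0 (oddPow p x)

end IsRadialSolution

end LaneEmden

/-! ### Emden's inequality and oscillation -/

lemma exists_deriv_lt_mul_rpow_div {w w' : ℝ → ℝ} {c p r₁ : ℝ} (hc : 0 < c) (hp : 1 < p)
    (hr₁ : 0 < r₁) (hpos : ∀ r, r₁ ≤ r → 0 < w r)
    (hw : ∀ r, r₁ ≤ r → HasDerivAt w (w' r) r) : ∃ r, r₁ ≤ r ∧ w' r < c * w r ^ p / r := by
  by_contra! hle
  -- Separating variables in `w' ≥ c w ^ p / r` shows that this function is antitone.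
  let φ (r : ℝ) : ℝ := w r ^ (1 - p) + (p - 1) * (c * log r)
  have hφ {r : ℝ} (hr : r₁ ≤ r) :
      HasDerivAt φ (w' r * (1 - p) * w r ^ (1 - p - 1) + (p - 1) * (c * r⁻¹)) r :=
    ((hw r hr).rpow_const (Or.inl (hpos r hr).ne')).add
      (((Real.hasDerivAt_log (hr₁.trans_le hr).ne').const_mul c).const_mul (p - 1))
  have hanti : AntitoneOn φ (Ici r₁) := by
    refine antitoneOn_of_hasDerivWithinAt_nonpos (convex_Ici r₁)
      (fun r hr => (hφ hr).continuousAt.continuousWithinAt)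
      (fun r hr => (hφ (interior_subset hr)).hasDerivWithinAt) fun r hr => ?_
    replace hr : r₁ ≤ r := interior_subset hr
    have hexp : 1 - p - 1 = -p := by ring
    rw [hexp, Real.rpow_neg (hpos r hr).le]
    have hpow : 0 < w r ^ p := rpow_pos_of_pos (hpos r hr) p
    have hgrowth : c * r⁻¹ ≤ w' r * (w r ^ p)⁻¹ := by
      rw [← div_eq_mul_inv (w' r), le_div_iff₀ hpow]
      exact (hle r hr).trans_eq' (by ring)
    linarith [mul_le_mul_of_nonneg_left hgrowth (sub_nonneg.2 hp.le)]
  have hlog : Tendsto (fun r => (p - 1) * (c * log r)) atTop atTop :=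
    (tendsto_log_atTop.const_mul_atTop hc).const_mul_atTop (sub_pos.2 hp)
  obtain ⟨r, hr, hbig⟩ := ((eventually_ge_atTop r₁).and (hlog.eventually_gt_atTop (φ r₁))).exists
  have hpow : 0 ≤ w r ^ (1 - p) := rpow_nonneg (hpos r hr).le _
  linarith [show w r ^ (1 - p) + (p - 1) * (c * log r) ≤ φ r₁ from hanti self_mem_Ici hr hr]

/-- The inward flux `-r ^ ν u'` of a radial function with derivative `v = u'`, through the sphere
of radius `r` in the real dimension `ν + 1`. -/
noncomputable def radialFlux (ν : ℝ) (v : ℝ → ℝ) (r : ℝ) : ℝ := -(r ^ ν * v r)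

section RadialFlux

variable {u v v' : ℝ → ℝ} {ν p L r r₁ : ℝ}

lemma hasDerivAt_radialFlux {y : ℝ} (hr : 0 < r) (hv : HasDerivAt v y r) :
    HasDerivAt (radialFlux ν v) (r ^ ν * -(ν * (v r / r) + y)) r := by
  refine (((Real.hasDerivAt_rpow_const (Or.inl hr.ne')).mul hv).neg).congr_deriv ?_
  rw [Real.rpow_sub_one hr.ne']
  ring

lemma monotoneOn_radialFlux (hr₁ : 0 < r₁) (hv : ∀ r, r₁ ≤ r → HasDerivAt v (v' r) r)
    (hle : ∀ r, r₁ ≤ r → ν * (v r / r) + v' r ≤ 0) : MonotoneOn (radialFlux ν v) (Ici r₁) := by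
  have hderiv {r : ℝ} (hr : r₁ ≤ r) := hasDerivAt_radialFlux (ν := ν) (hr₁.trans_le hr) (hv r hr)
  refine monotoneOn_of_hasDerivWithinAt_nonneg (convex_Ici r₁)
    (fun r hr => (hderiv hr).continuousAt.continuousWithinAt)
    (fun r hr => (hderiv (interior_subset hr)).hasDerivWithinAt) fun r hr => ?_
  have hr : r₁ ≤ r := interior_subset hr
  exact mul_nonneg (rpow_nonneg (hr₁.trans_le hr).le _) (neg_nonneg.2 (hle r hr))

lemma radialFlux_div_mul_le (hν : 0 ≤ ν) (hr : 0 < r)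
    (hu : ∀ s, r ≤ s → HasDerivAt u (v s) s) (hpos : 0 ≤ u (2 * r))
    (hmono : MonotoneOn (radialFlux ν v) (Ici r)) (hflux : 0 ≤ radialFlux ν v r) :
    radialFlux ν v r / (2 * r) ^ ν * r ≤ u r := by
  have hdecay := (convex_Icc r (2 * r)).image_sub_le_mul_sub_of_deriv_le
    (C := -(radialFlux ν v r / (2 * r) ^ ν))
    (fun s hs => (hu s hs.1).continuousAt.continuousWithinAt)
    (fun s hs => (hu s (interior_subset hs).1).differentiableAt.differentiableWithinAt)
    (fun s hs => ?_) r ⟨le_rfl, by linarith⟩ (2 * r) ⟨by linarith, le_rfl⟩ (by linarith)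
  · linarith
  obtain ⟨hrs, hs⟩ : s ∈ Icc r (2 * r) := interior_subset hs
  have hspos : 0 < s := hr.trans_le hrs
  rw [(hu s hrs).deriv, le_neg]
  calc radialFlux ν v r / (2 * r) ^ ν ≤ radialFlux ν v s / s ^ ν := by
        gcongr
        · exact hflux.trans (hmono self_mem_Ici hrs hrs)
        · exact hmono self_mem_Ici hrs hrs
    _ = -v s := by
        rw [radialFlux, neg_div, mul_div_cancel_left₀ _ (rpow_pos_of_pos hspos ν).ne']

lemma rpow_div_le_rpow_mul_rpow_div (hr : 1 ≤ r) (hL : 0 < L) (hp : 0 ≤ p)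
    (hsub : p * (ν - 1) ≤ ν + 1) {m x : ℝ} (hm : 0 ≤ m) (hx : m / (2 * r) ^ ν * r ≤ x) :
    ((2 ^ ν) ^ p * L)⁻¹ * m ^ p / r ≤ r ^ ν * (x ^ p / L) := by
  have hr₀ : 0 < r := one_pos.trans_le hr
  have hpow : 0 ≤ r / r ^ ν := by positivity
  have hexp : r⁻¹ ≤ r ^ ν * (r / r ^ ν) ^ p :=
    calc r⁻¹ = r ^ (-1 : ℝ) := (Real.rpow_neg_one r).symm
      _ ≤ r ^ (ν + (1 - ν) * p) := Real.rpow_le_rpow_of_exponent_le hr (by linarith)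
      _ = r ^ ν * (r / r ^ ν) ^ p := by
          rw [Real.rpow_add hr₀, Real.rpow_mul hr₀.le, Real.rpow_sub hr₀, Real.rpow_one]
  have hfactor : m / (2 * r) ^ ν * r = m * (r / r ^ ν) / 2 ^ ν := by
    rw [Real.mul_rpow two_pos.le hr₀.le]
    ring
  calc ((2 ^ ν) ^ p * L)⁻¹ * m ^ p / r
      = ((2 ^ ν) ^ p * L)⁻¹ * m ^ p * r⁻¹ := div_eq_mul_inv _ _
    _ ≤ ((2 ^ ν) ^ p * L)⁻¹ * m ^ p * (r ^ ν * (r / r ^ ν) ^ p) := by gcongr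
    _ = r ^ ν * ((m / (2 * r) ^ ν * r) ^ p / L) := by
        rw [hfactor, Real.div_rpow (mul_nonneg hm hpow) (by positivity), Real.mul_rpow hm hpow]
        ring
    _ ≤ r ^ ν * (x ^ p / L) := by gcongr

theorem exists_lt_of_subcritical (hν : 0 ≤ ν) (hp : 1 < p) (hL : 0 < L)
    (hsub : p * (ν - 1) ≤ ν + 1) (hr₁ : 1 ≤ r₁) (hu : ∀ r, r₁ ≤ r → HasDerivAt u (v r) r)
    (hv : ∀ r, r₁ ≤ r → HasDerivAt v (v' r) r) (hpos : ∀ r, r₁ ≤ r → 0 < u r) (hvr₁ : v r₁ < 0) :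
    ∃ r, r₁ ≤ r ∧ -(u r ^ p / L) < ν * (v r / r) + v' r := by
  by_contra! hle
  have hr₁_pos : 0 < r₁ := one_pos.trans_le hr₁
  have hmono : MonotoneOn (radialFlux ν v) (Ici r₁) :=
    monotoneOn_radialFlux hr₁_pos hv fun r hr =>
      (hle r hr).trans (neg_nonpos.2 (div_nonneg (rpow_nonneg (hpos r hr).le p) hL.le))
  have hflux (r : ℝ) (hr : r₁ ≤ r) : 0 < radialFlux ν v r :=
    (neg_pos.2 (mul_neg_of_pos_of_neg (rpow_pos_of_pos hr₁_pos ν) hvr₁)).trans_le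
      (hmono self_mem_Ici hr hr)
  obtain ⟨r, hr, hlt⟩ := exists_deriv_lt_mul_rpow_div (c := ((2 ^ ν) ^ p * L)⁻¹)
    (by positivity) hp hr₁_pos hflux fun r hr =>
      hasDerivAt_radialFlux (ν := ν) (hr₁_pos.trans_le hr) (hv r hr)
  have hr_pos : 0 < r := hr₁_pos.trans_le hr
  refine hlt.not_ge <| (rpow_div_le_rpow_mul_rpow_div (hr₁.trans hr) hL (zero_le_one.trans hp.le)
    hsub (hflux r hr).le ?_).trans
      (mul_le_mul_of_nonneg_left (le_neg_of_le_neg (hle r hr)) (rpow_nonneg hr_pos.le ν))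
  exact radialFlux_div_mul_le hν hr_pos (fun s hs => hu s (hr.trans hs))
    (hpos _ (by linarith)).le (hmono.mono (Ici_subset_Ici.2 hr)) (hflux r hr).le

end RadialFlux

lemma exists_neg_of_hasDerivAt_le_neg {f f' : ℝ → ℝ} {c ρ : ℝ} (hc : 0 < c)
    (hf : ∀ r, ρ ≤ r → HasDerivAt f (f' r) r) (hf' : ∀ r, ρ ≤ r → f' r ≤ -c) :
    ∃ r, ρ ≤ r ∧ f r < 0 := by
  have hlin (r : ℝ) (hr : ρ ≤ r) : f r - f ρ ≤ -c * (r - ρ) :=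
    (convex_Ici ρ).image_sub_le_mul_sub_of_deriv_le
      (fun s hs => (hf s hs).continuousAt.continuousWithinAt)
      (fun s hs => (hf s (interior_subset hs)).differentiableAt.differentiableWithinAt)
      (fun s hs => (hf s (interior_subset hs)).deriv.trans_le (hf' s (interior_subset hs)))
      ρ self_mem_Ici r hr hr
  have hstep : 0 ≤ (|f ρ| + 1) / c := by positivity
  refine ⟨ρ + (|f ρ| + 1) / c, by linarith, ?_⟩
  have hbound := hlin _ (le_add_of_nonneg_right hstep)
  rw [add_sub_cancel_left, neg_mul, mul_div_cancel₀ _ hc.ne'] at hbound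
  linarith [le_abs_self (f ρ)]

lemma nonpos_of_hasDerivAt_neg_of_eq_zero {f f' : ℝ → ℝ} {ρ : ℝ}
    (hf : ∀ r, ρ ≤ r → HasDerivAt f (f' r) r) (hzero : ∀ r, ρ ≤ r → f r = 0 → f' r < 0)
    (hρ : f ρ ≤ 0) {r : ℝ} (hr : ρ ≤ r) : f r ≤ 0 :=
  image_le_of_deriv_right_lt_deriv_boundary' (B := fun _ => 0) (B' := fun _ => 0)
    (fun s hs => (hf s hs.1).continuousAt.continuousWithinAt)
    (fun s hs => (hf s hs.1).hasDerivWithinAt) hρ continuousOn_const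
    (fun s _ => hasDerivWithinAt_const s _ _) (fun s hs => hzero s hs.1) ⟨hr, le_rfl⟩

namespace IsRadialSolution

variable {a b d p : ℝ} {u v : ℝ → ℝ}

lemma exists_deriv_neg_of_pos (h : IsRadialSolution (laneEmdenAccel a b d p) u v) (ha : 0 < a)
    (hb : 0 < b) (hd : 0 ≤ d) (hp : 0 ≤ p) {ρ : ℝ} (hρ : 0 < ρ) (hpos : ∀ r, ρ ≤ r → 0 < u r) :
    ∃ r, ρ ≤ r ∧ v r < 0 := by
  by_contra! hv
  have hmono : MonotoneOn u (Ici ρ) :=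
    monotoneOn_of_hasDerivWithinAt_nonneg (convex_Ici ρ) h.continuous.continuousOn
      (fun r _ => (h.hasDerivAt r).hasDerivWithinAt) fun r hr => hv r (interior_subset hr)
  have hdecel (r : ℝ) (hr : ρ ≤ r) : laneEmdenAccel a b d p (r⁻¹ • v r) (u r) ≤ -(u ρ ^ p / b) := by
    have hslope : 0 ≤ r⁻¹ • v r := smul_nonneg (inv_nonneg.2 (hρ.le.trans hr)) (hv r hr)
    refine (antitone_laneEmdenAccel ha hb hd (u r) hslope).trans ?_
    simp only [laneEmdenAccel_zero_of_pos (hpos r hr)]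
    gcongr
    exacts [(hpos ρ le_rfl).le, hmono self_mem_Ici hr hr]
  obtain ⟨r, hr, hneg⟩ := exists_neg_of_hasDerivAt_le_neg
    (div_pos (rpow_pos_of_pos (hpos ρ le_rfl) p) hb)
    (fun r hr => h.hasDerivAt_deriv r (hρ.trans_le hr)) hdecel
  exact hneg.not_ge (hv r hr)

theorem exists_nonpos (h : IsRadialSolution (laneEmdenAccel a b d p) u v) (ha : 0 < a)
    (hb : 0 < b) (hd : 0 ≤ d) (hp : 1 < p)
    (hsub : p * (pucciDim a b d - 2) ≤ pucciDim a b d) (r₀ : ℝ) : ∃ r, r₀ < r ∧ u r ≤ 0 := by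
  by_contra! hpos
  let ρ := max (r₀ + 1) 1
  have hρ : 1 ≤ ρ := le_max_right _ _
  replace hpos (r : ℝ) (hr : ρ ≤ r) : 0 < u r :=
    hpos r ((lt_add_one r₀).trans_le ((le_max_left _ _).trans hr))
  obtain ⟨r₁, hρr₁, hvr₁⟩ :=
    h.exists_deriv_neg_of_pos ha hb hd (zero_le_one.trans hp.le) (one_pos.trans_le hρ) hpos
  have hr₁ : 1 ≤ r₁ := hρ.trans hρr₁
  have hv (r : ℝ) (hr : r₁ ≤ r) := h.hasDerivAt_deriv r (one_pos.trans_le (hr₁.trans hr))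
  have hv_nonpos (r : ℝ) (hr : r₁ ≤ r) : v r ≤ 0 := by
    refine nonpos_of_hasDerivAt_neg_of_eq_zero hv (fun r hr hvr => ?_) hvr₁.le hr
    have hur := hpos r (hρr₁.trans hr)
    rw [hvr, smul_zero]
    exact (pos_iff_neg_of_mul_neg (mul_laneEmdenAccel_zero_neg ha hb hur.ne')).1 hur
  have hdim : 0 ≤ pucciDim a b d - 1 := by rw [pucciDim, add_sub_cancel_right]; positivity
  obtain ⟨r, hr, hlt⟩ := exists_lt_of_subcritical hdim hp (lt_max_of_lt_left ha : 0 < max a b)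
    (by linarith) hr₁ (fun r _ => h.hasDerivAt r) hv (fun r hr => hpos r (hρr₁.trans hr)) hvr₁
  have hur := hpos r (hρr₁.trans hr)
  have hq : r⁻¹ * v r ≤ 0 :=
    mul_nonpos_of_nonneg_of_nonpos (inv_nonneg.2 (zero_le_one.trans (hr₁.trans hr)))
      (hv_nonpos r hr)
  rw [laneEmdenAccel, smul_eq_mul, oddPow_of_pos hur, ← inv_mul_eq_div r] at hlt
  exact hlt.not_ge
    (pucciDim_sub_one_mul_add_pucciAccel_le ha hb hd hq (rpow_nonneg hur.le p))

theorem exists_neg_one_pow_mul_nonpos (h : IsRadialSolution (laneEmdenAccel a b d p) u v)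
    (ha : 0 < a) (hb : 0 < b) (hd : 0 ≤ d) (hp : 1 < p)
    (hsub : p * (pucciDim a b d - 2) ≤ pucciDim a b d) (j : ℕ) (r₀ : ℝ) :
    ∃ r, r₀ < r ∧ (-1) ^ j * u r ≤ 0 := by
  rcases neg_one_pow_eq_or ℝ j with hj | hj
  · simpa [hj] using h.exists_nonpos ha hb hd hp hsub r₀
  · simpa [hj] using h.neg.exists_nonpos hb ha hd hp (pucciDim_comm a b d ▸ hsub) r₀

end IsRadialSolution

/-! ### Nodal sequences -/

lemma exists_first_zero {g : ℝ → ℝ} {x z : ℝ} (hg : Continuous g) (hxz : x < z) (hz : g z ≤ 0)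
    (hx : ∀ᶠ r in 𝓝[>] x, 0 < g r) : ∃ y, x < y ∧ g y = 0 ∧ ∀ r ∈ Ioo x y, 0 < g r := by
  obtain ⟨m, hxm, hm⟩ := mem_nhdsGT_iff_exists_Ioc_subset.1 hx
  replace hm (r : ℝ) (hr : r ∈ Ioc x m) : 0 < g r := hm hr
  have hmz : m ≤ z := le_of_not_gt fun hzm => (hm z ⟨hxz, hzm.le⟩).not_ge hz
  obtain ⟨y, ⟨⟨hmy, hyz⟩, hy⟩, hleast⟩ :=
    (isCompact_Icc.inter_right (isClosed_Iic.preimage hg)).exists_isLeast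
      (⟨z, ⟨hmz, le_rfl⟩, hz⟩ : (Icc m z ∩ g ⁻¹' Iic 0).Nonempty)
  obtain ⟨c, ⟨hmc, hcy⟩, hc⟩ := intermediate_value_Icc' hmy hg.continuousOn
    ⟨hy, (hm m ⟨hxm, le_rfl⟩).le⟩
  obtain rfl : c = y := hcy.antisymm (hleast ⟨⟨hmc, hcy.trans hyz⟩, hc.le⟩)
  refine ⟨c, hxm.trans_le hmy, hc, fun r hr => ?_⟩
  by_contra! hgr
  have hmr : m < r := lt_of_not_ge fun hrm => (hm r ⟨hr.1, hrm⟩).not_ge hgr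
  exact hr.2.not_ge (hleast ⟨⟨hmr.le, hr.2.le.trans hyz⟩, hgr⟩)

lemma eventually_neg_of_pos_of_simple_zero {g : ℝ → ℝ} {g' x y : ℝ} (hxy : x < y)
    (hg : HasDerivAt g g' y) (hg' : g' ≠ 0) (hy : g y = 0) (hpos : ∀ r ∈ Ioo x y, 0 < g r) :
    ∀ᶠ r in 𝓝[>] y, g r < 0 := by
  rw [← hg.deriv] at hg'
  rcases hg'.lt_or_gt with hneg | hinc
  · filter_upwards [(eventually_nhdsWithin_sign_eq_of_deriv_neg hneg hy).filter_mono
      nhdsWithin_le_nhds, self_mem_nhdsWithin] with r hr hyr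
    rwa [sign_neg (sub_neg.2 hyr), sign_eq_neg_one_iff] at hr
  · obtain ⟨r, hr, hrI⟩ := (((eventually_nhdsWithin_sign_eq_of_deriv_pos hinc hy).filter_mono
      nhdsWithin_le_nhds).and (Ioo_mem_nhdsLT hxy)).exists
    rw [sign_neg (sub_neg.2 hrI.2), sign_eq_neg_one_iff] at hr
    exact absurd hr (hpos r hrI).not_gt

/-- `rr 1 < rr 2 < ⋯` are the successive positive zeros of `u`, which is positive on
`(0, rr 1)` and changes sign at each of them; `rr 0 = 0` is not a zero but the origin. -/
structure IsNodalSequence (u : ℝ → ℝ) (rr : ℕ → ℝ) : Prop where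
  zero : rr 0 = 0
  strictMono : StrictMono rr
  eq_zero : ∀ j, u (rr (j + 1)) = 0
  pos : ∀ j, ∀ r ∈ Ioo (rr j) (rr (j + 1)), 0 < (-1) ^ j * u r

theorem exists_isNodalSequence {u v : ℝ → ℝ} (hu : ∀ r, HasDerivAt u (v r) r) (hu₀ : 0 < u 0)
    (hsimple : ∀ r, 0 < r → u r = 0 → v r ≠ 0)
    (hosc : ∀ j : ℕ, ∀ r₀, ∃ r, r₀ < r ∧ (-1) ^ j * u r ≤ 0) :
    ∃ rr, IsNodalSequence u rr := by
  have exists_next_zero (j : ℕ) (x : ℝ) : 0 ≤ x ∧ (∀ᶠ r in 𝓝[>] x, 0 < (-1) ^ j * u r) →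
      ∃ y, x < y ∧ u y = 0 ∧ (∀ r ∈ Ioo x y, 0 < (-1) ^ j * u r) ∧
        ∀ᶠ r in 𝓝[>] y, 0 < (-1) ^ (j + 1) * u r := by
    rintro ⟨hx, hpos⟩
    obtain ⟨z, hxz, hz⟩ := hosc j x
    have hderiv (r : ℝ) : HasDerivAt (fun s => (-1) ^ j * u s) ((-1) ^ j * v r) r :=
      (hu r).const_mul _
    obtain ⟨y, hxy, hy, hpos_left⟩ := exists_first_zero
      (continuous_iff_continuousAt.2 fun r => (hderiv r).continuousAt) hxz hz hpos
    have huy : u y = 0 := by simpa using hy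
    have hvy : (-1) ^ j * v y ≠ 0 := mul_ne_zero (by simp) (hsimple y (hx.trans_lt hxy) huy)
    refine ⟨y, hxy, huy, hpos_left, ?_⟩
    filter_upwards [eventually_neg_of_pos_of_simple_zero hxy (hderiv y) hvy hy hpos_left] with r hr
    rwa [pow_succ, mul_neg_one, neg_mul, neg_pos]
  choose! next hlt hzero hpos hright using exists_next_zero
  let rr (j : ℕ) : ℝ := Nat.rec 0 next j
  have hrr (j : ℕ) : 0 ≤ rr j ∧ ∀ᶠ r in 𝓝[>] rr j, 0 < (-1) ^ j * u r := by
    induction j with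
    | zero =>
      refine ⟨le_rfl, ?_⟩
      simp only [pow_zero, one_mul]
      exact ((hu 0).continuousAt.eventually_const_lt hu₀).filter_mono nhdsWithin_le_nhds
    | succ j ih => exact ⟨ih.1.trans (hlt j _ ih).le, hright j _ ih⟩
  exact ⟨rr, rfl, strictMono_nat_of_lt_succ fun j => hlt j _ (hrr j), fun j => hzero j _ (hrr j),
    fun j => hpos j _ (hrr j)⟩

/-! ### Rescaling and the Dirichlet problem in a ball -/

section Rescale

variable {a b d p : ℝ} {u v : ℝ → ℝ}

lemma laneEmdenAccel_mul_mul {γ σ : ℝ} (hγ : 0 ≤ γ) (hγσ : γ ^ (p - 1) = σ ^ 2) (q x : ℝ) :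
    laneEmdenAccel a b d p (γ * σ ^ 2 * q) (γ * x) = γ * σ ^ 2 * laneEmdenAccel a b d p q x := by
  rw [laneEmdenAccel, oddPow_mul hγ, hγσ, mul_comm (σ ^ 2) γ,
    pucciAccel_mul_mul (mul_nonneg hγ (sq_nonneg σ)), laneEmdenAccel]

lemma IsRadialSolution.rescale (h : IsRadialSolution (laneEmdenAccel a b d p) u v) {γ σ : ℝ}
    (hγ : 0 ≤ γ) (hσ : 0 < σ) (hγσ : γ ^ (p - 1) = σ ^ 2) :
    IsRadialSolution (laneEmdenAccel a b d p) (fun r => γ * u (σ * r))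
      (fun r => γ * σ * v (σ * r)) where
  hasDerivAt r := by
    refine (((h.hasDerivAt (σ * r)).comp r (hasDerivAt_const_mul σ)).const_mul γ).congr_deriv ?_
    ring
  continuous_deriv := (h.continuous_deriv.comp (continuous_const_mul σ)).const_mul (γ * σ)
  deriv_zero := by simp [h.deriv_zero]
  hasDerivAt_deriv r hr := by
    have hslope : r⁻¹ • (γ * σ * v (σ * r)) = γ * σ ^ 2 * ((σ * r)⁻¹ • v (σ * r)) := by
      simp only [smul_eq_mul]
      field_simp
    refine (((h.hasDerivAt_deriv (σ * r) (mul_pos hσ hr)).comp r (hasDerivAt_const_mul σ)).const_mul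
      (γ * σ)).congr_deriv ?_
    rw [hslope, laneEmdenAccel_mul_mul hγ hγσ]
    simp only [smul_eq_mul]
    ring

lemma IsNodalSequence.rescale {rr : ℕ → ℝ} (h : IsNodalSequence u rr) {γ σ : ℝ} (hγ : 0 < γ)
    (hσ : 0 < σ) : IsNodalSequence (fun r => γ * u (σ * r)) (fun j => rr j / σ) where
  zero := by rw [h.zero, zero_div]
  strictMono i j hij := div_lt_div_of_pos_right (h.strictMono hij) hσ
  eq_zero j := by rw [mul_div_cancel₀ _ hσ.ne', h.eq_zero, mul_zero]
  pos j r hr := by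
    rw [mul_left_comm]
    refine mul_pos hγ (h.pos j _ ⟨?_, ?_⟩)
    · exact (div_lt_iff₀' hσ).1 hr.1
    · exact (lt_div_iff₀' hσ).1 hr.2

theorem exists_isRadialSolution_isNodalSequence (ha : 0 < a) (hb : 0 < b) (hd : 0 ≤ d)
    (hp : 1 < p) (hsub : p * (pucciDim a b d - 2) ≤ pucciDim a b d) {R : ℝ} (hR : 0 < R) {k : ℕ}
    (hk : 1 ≤ k) : ∃ u v rr, IsRadialSolution (laneEmdenAccel a b d p) u v ∧ 0 < u 0 ∧
      IsNodalSequence u rr ∧ rr k = R := by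
  obtain ⟨u, v, h, hu₀⟩ := exists_isRadialSolution_laneEmdenAccel ha hb hd hp
  obtain ⟨rr, hrr⟩ := exists_isNodalSequence h.hasDerivAt hu₀
    (fun r hr hur => h.deriv_ne_zero_of_laneEmdenAccel ha hb hd hp hu₀.ne' hr hur)
    (h.exists_neg_one_pow_mul_nonpos ha hb hd hp hsub)
  have hrk : 0 < rr k := hrr.zero ▸ hrr.strictMono hk
  have hσ : 0 < rr k / R := div_pos hrk hR
  have hγ : 0 < ((rr k / R) ^ 2) ^ (p - 1)⁻¹ := by positivity
  have hγσ : (((rr k / R) ^ 2) ^ (p - 1)⁻¹) ^ (p - 1) = (rr k / R) ^ 2 :=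
    Real.rpow_inv_rpow (sq_nonneg _) (sub_pos.2 hp).ne'
  exact ⟨_, _, _, h.rescale hγ.le hσ hγσ, by simpa using mul_pos hγ hu₀, hrr.rescale hγ hσ,
    div_div_cancel₀ hrk.ne'⟩

end Rescale

section NodalBallSol

variable {a b d p R : ℝ} {k : ℕ}

lemma IsRadialSolution.nodalBallSol {u v : ℝ → ℝ} {rr : ℕ → ℝ}
    (h : IsRadialSolution (laneEmdenAccel a b d p) u v) (ha : 0 < a) (hb : 0 < b) (hp : 1 < p)
    (hu₀ : 0 < u 0) (hrr : IsNodalSequence u rr) (hk : 1 ≤ k) :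
    NodalBallSol p (rr k) k (radialPucci a b d) 1 := by
  have hzero {j : ℕ} (hj : 1 ≤ j) : u (rr j) = 0 := by
    rw [← Nat.sub_add_cancel hj, hrr.eq_zero]
  have hslope : ContinuousOn (fun r => r⁻¹ • v r) (Ioc 0 (rr k)) := fun r hr =>
    ((continuousAt_inv₀ hr.1.ne').smul h.continuous_deriv.continuousAt).continuousWithinAt
  have haccel : ContinuousOn (fun r => laneEmdenAccel a b d p (r⁻¹ • v r) (u r)) (Ioc 0 (rr k)) :=
    Continuous.comp_continuousOn (f := fun r => (r⁻¹ • v r, u r)) (continuous_laneEmdenAccel hp)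
      (hslope.prodMk h.continuous.continuousOn)
  have heq (r : ℝ) : -radialPucci a b d v (fun r => laneEmdenAccel a b d p (r⁻¹ • v r) (u r)) r =
      oddPow p (u r) := by
    rw [radialPucci, div_eq_inv_mul, neg_eq_iff_eq_neg]
    exact pucciFun_pucciAccel_add ha hb d _ _
  refine ⟨u, v, fun r => laneEmdenAccel a b d p (r⁻¹ • v r) (u r), rr, hrr.zero, rfl,
    fun j _ => hrr.strictMono j.lt_succ_self, fun r _ => h.hasDerivAt r,
    h.continuous_deriv.continuousOn, fun r hr => h.hasDerivAt_deriv r hr.1, haccel, h.deriv_zero,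
    hzero hk, fun r _ => heq r, by rwa [one_mul], fun j _ hj => hzero hj, ?_⟩
  simpa only [one_mul] using fun j _ => hrr.pos j

lemma radialPucci_neg (a b d : ℝ) (u' u'' : ℝ → ℝ) (r : ℝ) :
    radialPucci a b d (-u') (-u'') r = -radialPucci b a d u' u'' r := by
  simp only [radialPucci, Pi.neg_apply, neg_div, pucciFun_neg]
  ring

lemma nodalBallSol_neg_one (h : NodalBallSol p R k (radialPucci b a d) 1) :
    NodalBallSol p R k (radialPucci a b d) (-1) := by
  obtain ⟨w, w', w'', rr, hrr₀, hrrk, hlt, hw, hw'_cont, hw', hw''_cont, hw'₀, hwR, heq, hw₀,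
    hzero, hsign⟩ := h
  refine ⟨-w, -w', -w'', rr, hrr₀, hrrk, hlt, fun r hr => (hw r hr).neg, hw'_cont.neg,
    fun r hr => (hw' r hr).neg, hw''_cont.neg, by simp [hw'₀], by simp [hwR], fun r hr => ?_,
    by simpa using hw₀, fun j hj hj₁ => by simp [hzero j hj hj₁],
    fun j hj r hr => by simpa using hsign j hj r hr⟩
  rw [radialPucci_neg, Pi.neg_apply, abs_neg, mul_neg, ← heq r hr]

theorem nodalBallSol_radialPucci (ha : 0 < a) (hb : 0 < b) (hd : 0 ≤ d) (hp : 1 < p)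
    (hsub : p * (pucciDim a b d - 2) ≤ pucciDim a b d) (hR : 0 < R) (hk : 1 ≤ k) :
    NodalBallSol p R k (radialPucci a b d) 1 := by
  obtain ⟨u, v, rr, h, hu₀, hrr, rfl⟩ :=
    exists_isRadialSolution_isNodalSequence ha hb hd hp hsub hR hk
  exact h.nodalBallSol ha hb hp hu₀ hrr hk

theorem sign_changing_radial_solutions_in_ball_general (ha : 0 < a) (hb : 0 < b) (hd : 0 ≤ d)
    (hp : 1 < p) (hsub : p * (pucciDim a b d - 2) ≤ pucciDim a b d) (hR : 0 < R) (hk : 1 ≤ k) :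
    NodalBallSol p R k (radialPucci a b d) 1 ∧ NodalBallSol p R k (radialPucci a b d) (-1) :=
  ⟨nodalBallSol_radialPucci ha hb hd hp hsub hR hk, nodalBallSol_neg_one <|
    nodalBallSol_radialPucci hb ha hd hp (pucciDim_comm a b d ▸ hsub) hR hk⟩

end NodalBallSol

lemma Pp_eq_radialPucci (n : ℕ) (lam Lam : ℝ) :
    Pp n lam Lam = radialPucci Lam lam ((n : ℝ) - 1) := rfl

lemma Pm_eq_radialPucci (n : ℕ) (lam Lam : ℝ) :
    Pm n lam Lam = radialPucci lam Lam ((n : ℝ) - 1) := rfl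

/-- Theorem 3 (paper): for `p` subcritical (`p ≤ ñ₋/(ñ₋−2)`, or no restriction if `ñ₋ = 2`),
each of the problems `−𝓜^±_{λ,Λ}(D²u) = |u|^{p−1}u` in the ball `B_R`, `u = 0` on `∂B_R`,
has, for every `k ≥ 1`, radial sign-changing solutions with `k` nodal regions of both sign
patterns. -/
theorem sign_changing_radial_solutions_in_ball
    (n : ℕ) (hn : 2 ≤ n) (lam Lam p ntil : ℝ) (hlam : 0 < lam) (hlL : lam ≤ Lam) (hp : 1 < p)
    (hnt : ntil = Lam / lam * ((n : ℝ) - 1) + 1)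
    (hsub : ntil = 2 ∨ (2 < ntil ∧ p ≤ ntil / (ntil - 2)))
    (R : ℝ) (hR : 0 < R) (k : ℕ) (hk : 1 ≤ k) :
    NodalBallSol p R k (Pp n lam Lam) 1 ∧ NodalBallSol p R k (Pp n lam Lam) (-1) ∧
      NodalBallSol p R k (Pm n lam Lam) 1 ∧ NodalBallSol p R k (Pm n lam Lam) (-1) := by
  have hLam : 0 < Lam := hlam.trans_le hlL
  have hn₁ : (0 : ℝ) ≤ (n : ℝ) - 1 := sub_nonneg.2 (by exact_mod_cast one_le_two.trans hn)
  have hdim : pucciDim Lam lam ((n : ℝ) - 1) = ntil := by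
    rw [pucciDim, max_eq_left hlL, min_eq_right hlL, hnt]
  have hmul : p * (ntil - 2) ≤ ntil := by
    rcases hsub with h | ⟨h, hle⟩
    · simp [h]
    · exact (le_div_iff₀ (sub_pos.2 h)).1 hle
  rw [← hdim] at hmul
  rw [Pp_eq_radialPucci, Pm_eq_radialPucci, ← and_assoc]
  exact ⟨sign_changing_radial_solutions_in_ball_general hLam hlam hn₁ hp hmul hR hk,
    sign_changing_radial_solutions_in_ball_general hlam hLam hn₁ hp
      (pucciDim_comm Lam lam _ ▸ hmul) hR hk⟩
end

section
/- Let 0 < a < b. Then there exist functions w₊, w₋ : [a,b] → ℝ, twice continuously differentiable on [a,b], such that: w₊(a) = 0, w₊'(b) = 0, w₊(r) > 0 for all r ∈ (a,b], and −𝓕(r, w₊''(r), w₊'(r)/r) = w₊(r)^p for all r ∈ (a,b); and w₋(a) = 0, w₋'(b) = 0, w₋(r) < 0 for all r ∈ (a,b], and −𝓕(r, w₋''(r), w₋'(r)/r) = −|w₋(r)|^p for all r ∈ (a,b). (Equivalently: the mixed boundary value problem F(x,D²u) + |u|^{p−1}u = 0 in the annulus A_{a,b}, u = 0 on |x| = a,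 ∂u/∂n = 0 on |x| = b, has a positive and a negative radial solution.) -/
open Real Set

/-- Uniform ellipticity of the radial form `𝓕(r, m, l)` of a uniformly elliptic operator. -/
def UnifElliptic (n : ℕ) (lam Lam : ℝ) (F : ℝ → ℝ → ℝ → ℝ) : Prop :=
  ∀ r : ℝ, 0 < r → ∀ m l s t : ℝ, 0 ≤ s → 0 ≤ t →
    lam * (s + ((n : ℝ) - 1) * t) ≤ F r (m + s) (l + t) - F r m l ∧
      F r (m + s) (l + t) - F r m l ≤ Lam * (s + ((n : ℝ) - 1) * t)

/-!
Ellipticity lets one solve `-F r w'' w' = w ^ p` for the second derivative: `w'' = -G r w' (w ^ p)`,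
with `G` Lipschitz in the last two variables and nonnegative where they are. Shoot backward from
`w b = γ`, `w' b = 0`: as long as `w ≥ 0`, the solution is nondecreasing and concave. For small `γ`,
Grönwall's inequality and `s ^ p = o(s)` at `0` give `w' = o(γ)`, so `w a ≥ 0`. For large `γ`,
concavity would keep `w ≥ γ / 2` on the right half of `[a, b]` if `w a ≥ 0`, and `s = o(s ^ p)` at
infinity would then make `w` rise by more than `γ` on the left half, so `w a < 0`. By continuity
some `γ` in between has `w a = 0`. The negative solution is the reflection of the positive solution
for the elliptic operator `-F r (-m) (-l)`.
-/

open Asymptotics Filter Function Metric Topology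
open scoped NNReal

/-! ### Real functions with bounded increments -/

theorem mul_sub_le_of_le_hasDerivAt {f f' : ℝ → ℝ} {x y C : ℝ} (hxy : x ≤ y)
    (hf : ∀ t ∈ Icc x y, HasDerivAt f (f' t) t) (hC : ∀ t ∈ Icc x y, C ≤ f' t) :
    C * (y - x) ≤ f y - f x := by
  refine (convex_Icc x y).mul_sub_le_image_sub_of_le_deriv (HasDerivAt.continuousOn hf)
    (fun t ht => ?_) (fun t ht => ?_) x (left_mem_Icc.2 hxy) y (right_mem_Icc.2 hxy) hxy
  · exact (hf t (interior_subset ht)).differentiableAt.differentiableWithinAt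
  · rw [(hf t (interior_subset ht)).deriv]
    exact hC t (interior_subset ht)

theorem lipschitzWith_of_monotone_of_sub_le {f : ℝ → ℝ} {K : ℝ≥0} (hf : Monotone f)
    (h : ∀ x y, x ≤ y → f y - f x ≤ K * (y - x)) : LipschitzWith K f := by
  refine LipschitzWith.of_le_add_mul K fun x y => ?_
  rcases le_total x y with hxy | hyx
  · exact (hf hxy).trans (le_add_of_nonneg_right (by positivity))
  · rw [Real.dist_eq, abs_of_nonneg (sub_nonneg.2 hyx)]
    exact sub_le_iff_le_add'.1 (h y x hyx)

theorem strictMono_of_mul_sub_le {f : ℝ → ℝ} {c : ℝ} (hc : 0 < c)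
    (h : ∀ x y, x ≤ y → c * (y - x) ≤ f y - f x) : StrictMono f := fun x y hxy =>
  sub_pos.1 ((mul_pos hc (sub_pos.2 hxy)).trans_le (h x y hxy.le))

theorem surjective_of_mul_sub_le {f : ℝ → ℝ} {c : ℝ} (hf : Continuous f) (hc : 0 < c)
    (h : ∀ x y, x ≤ y → c * (y - x) ≤ f y - f x) : Surjective f := by
  refine hf.surjective ?_ ?_
  · refine tendsto_atTop_mono' atTop ?_
      (tendsto_atTop_add_const_left atTop (f 0) (tendsto_id.const_mul_atTop hc))
    filter_upwards [eventually_ge_atTop 0] with x hx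
    have := h 0 x hx
    rw [id]; linarith
  · refine tendsto_atBot_mono' atBot ?_
      (tendsto_atBot_add_const_left atBot (f 0) (tendsto_id.const_mul_atBot hc))
    filter_upwards [eventually_le_atBot 0] with x hx
    have := h x 0 hx
    rw [id]; linarith

theorem continuous_of_strictMono_of_apply_eq {X α β : Type*} [TopologicalSpace X]
    [LinearOrder α] [TopologicalSpace α] [OrderTopology α]
    [LinearOrder β] [TopologicalSpace β] [OrderClosedTopology β]
    {Φ : X → α → β} {c : X → β} {g : X → α} (hmono : ∀ x, StrictMono (Φ x))
    (hΦ : ∀ m, Continuous (Φ · m)) (hc : Continuous c) (hg : ∀ x, Φ x (g x) = c x) :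
    Continuous g := by
  refine continuous_iff_continuousAt.2 fun x => tendsto_order.2 ⟨fun m hm => ?_, fun m hm => ?_⟩
  · have hlt : Φ x m < c x := hg x ▸ hmono x hm
    filter_upwards [(hΦ m).continuousAt.eventually_lt hc.continuousAt hlt] with z hz
    exact (hmono z).lt_iff_lt.1 (hz.trans_eq (hg z).symm)
  · have hlt : c x < Φ x m := hg x ▸ hmono x hm
    filter_upwards [hc.continuousAt.eventually_lt (hΦ m).continuousAt hlt] with z hz
    exact (hmono z).lt_iff_lt.1 ((hg z).trans_lt hz)

/-! ### Ordinary differential equations -/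

theorem isPicardLindelof_of_bounded_of_lipschitz {E : Type*} [NormedAddCommGroup E]
    {f : ℝ → E → E} {tmin tmax : ℝ} (t₀ : Icc tmin tmax) (x₀ : E) (r : ℝ≥0) {L K : ℝ≥0}
    (hK : ∀ t ∈ Icc tmin tmax, LipschitzWith K (f t))
    (hc : ∀ x, ContinuousOn (f · x) (Icc tmin tmax)) (hL : ∀ t ∈ Icc tmin tmax, ∀ x, ‖f t x‖ ≤ L) :
    IsPicardLindelof f t₀ x₀ (r + L * (max (tmax - t₀) (t₀ - tmin)).toNNReal) r L K where
  lipschitzOnWith t ht := (hK t ht).lipschitzOnWith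
  continuousOn x _ := hc x
  norm_le t ht x _ := hL t ht x
  mul_max_le := by
    rw [NNReal.coe_add, add_sub_cancel_left, NNReal.coe_mul, Real.coe_toNNReal]
    exact le_max_of_le_left (sub_nonneg.2 t₀.2.2)

theorem norm_le_gronwallBound_of_norm_deriv_left_le {E : Type*} [NormedAddCommGroup E]
    [NormedSpace ℝ E] {f f' : ℝ → E} {δ K ε a b : ℝ}
    (hf : ∀ t ∈ Icc a b, HasDerivAt f (f' t) t) (hb : ‖f b‖ ≤ δ)
    (bound : ∀ t ∈ Icc a b, ‖f' t‖ ≤ K * ‖f t‖ + ε) :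
    ∀ t ∈ Icc a b, ‖f t‖ ≤ gronwallBound δ K ε (b - t) := by
  have hmem : ∀ s ∈ Icc (-b) (-a), -s ∈ Icc a b := fun s hs =>
    ⟨le_neg_of_le_neg hs.2, neg_le_of_neg_le hs.1⟩
  have hd : ∀ s ∈ Icc (-b) (-a), HasDerivAt (fun s => f (-s)) (-f' (-s)) s := fun s hs => by
    simpa [comp_def] using (hf _ (hmem s hs)).scomp s (hasDerivAt_neg s)
  intro t ht
  have key := norm_le_gronwallBound_of_norm_deriv_right_le (HasDerivAt.continuousOn hd)
    (fun s hs => (hd s (Ico_subset_Icc_self hs)).hasDerivWithinAt) (by simpa using hb)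
    (fun s hs => by simpa using bound _ (hmem s (Ico_subset_Icc_self hs)))
    (-t) ⟨neg_le_neg ht.2, neg_le_neg ht.1⟩
  simpa [neg_add_eq_sub] using key

theorem gronwallBound_zero_mul (K ε c x : ℝ) :
    gronwallBound 0 K (ε * c) x = gronwallBound 0 K ε x * c := by
  unfold gronwallBound
  split_ifs <;> ring

/-! ### Elliptic operators and their normal forms -/

/-- Uniform ellipticity, for radii `r ∈ I`, of an operator `F r w'' w'` acting on functions of one
variable. The third argument is `w'` itself: the radial form `𝓕` corresponds to
`F r m y = 𝓕 r m (y / r)`. -/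
structure IsElliptic (F : ℝ → ℝ → ℝ → ℝ) (I : Set ℝ) (lam : ℝ) (L : ℝ≥0) : Prop where
  pos : 0 < lam
  continuousOn : ContinuousOn (fun q : ℝ × ℝ × ℝ => F q.1 q.2.1 q.2.2) (I ×ˢ univ)
  apply_zero : ∀ r ∈ I, F r 0 0 = 0
  mul_sub_le : ∀ r ∈ I, ∀ y m m', m ≤ m' → lam * (m' - m) ≤ F r m' y - F r m y
  monotone : ∀ r ∈ I, ∀ m, Monotone (F r m)
  lipschitzWith : ∀ r ∈ I, LipschitzWith L (uncurry (F r))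

namespace UnifElliptic

variable {n : ℕ} {lam Lam r : ℝ} {F : ℝ → ℝ → ℝ → ℝ}

theorem le (h : UnifElliptic n lam Lam F) : lam ≤ Lam := by
  have := h 1 one_pos 0 0 1 0 zero_le_one le_rfl
  linarith

theorem mul_sub_le (h : UnifElliptic n lam Lam F) (hr : 0 < r) (l m m' : ℝ) (hm : m ≤ m') :
    lam * (m' - m) ≤ F r m' l - F r m l := by
  simpa using (h r hr m l (m' - m) 0 (sub_nonneg.2 hm) le_rfl).1

theorem lipschitzWith_left (h : UnifElliptic n lam Lam F) (hlam : 0 < lam) (hr : 0 < r) (l : ℝ) :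
    LipschitzWith Lam.toNNReal (F r · l) := by
  refine lipschitzWith_of_monotone_of_sub_le
    (strictMono_of_mul_sub_le hlam (h.mul_sub_le hr l)).monotone fun m m' hm => ?_
  rw [Real.coe_toNNReal _ (hlam.le.trans h.le)]
  simpa using (h r hr m l (m' - m) 0 (sub_nonneg.2 hm) le_rfl).2

theorem monotone_right (h : UnifElliptic n lam Lam F) (hn : 1 ≤ n) (hlam : 0 < lam) (hr : 0 < r)
    (m : ℝ) : Monotone (F r m) := fun l l' hl => by
  have hn1 : (0 : ℝ) ≤ n - 1 := sub_nonneg.2 (mod_cast hn)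
  have hinc := (h r hr m l 0 (l' - l) le_rfl (sub_nonneg.2 hl)).1
  rw [zero_add, add_zero, add_sub_cancel] at hinc
  exact sub_nonneg.1 (hinc.trans' (mul_nonneg hlam.le (mul_nonneg hn1 (sub_nonneg.2 hl))))

theorem lipschitzWith_right (h : UnifElliptic n lam Lam F) (hn : 1 ≤ n) (hlam : 0 < lam)
    (hr : 0 < r) (m : ℝ) : LipschitzWith (Lam * (n - 1)).toNNReal (F r m) := by
  have hn1 : (0 : ℝ) ≤ n - 1 := sub_nonneg.2 (mod_cast hn)
  refine lipschitzWith_of_monotone_of_sub_le (h.monotone_right hn hlam hr m) fun l l' hl => ?_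
  rw [Real.coe_toNNReal _ (mul_nonneg (hlam.le.trans h.le) hn1), mul_assoc]
  simpa using (h r hr m l 0 (l' - l) le_rfl (sub_nonneg.2 hl)).2

theorem isElliptic_comp_div (h : UnifElliptic n lam Lam F) (hn : 1 ≤ n) (hlam : 0 < lam)
    {I : Set ℝ} {a : ℝ} (ha : 0 < a) (hI : I ⊆ Ici a)
    (hF : ContinuousOn (fun q : ℝ × ℝ × ℝ => F q.1 q.2.1 q.2.2) (I ×ˢ univ))
    (hF0 : ∀ r ∈ I, F r 0 0 = 0) :
    IsElliptic (fun r m y => F r m (y / r)) I lam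
      (Lam.toNNReal + (Lam * (n - 1)).toNNReal * a⁻¹.toNNReal) := by
  have hpos : ∀ r ∈ I, 0 < r := fun r hr => ha.trans_le (hI hr)
  have hdiv : ∀ r ∈ I, LipschitzWith a⁻¹.toNNReal (fun y : ℝ => y / r) := fun r hr => by
    refine LipschitzWith.of_dist_le_mul fun y y' => ?_
    rw [Real.coe_toNNReal _ (inv_nonneg.2 ha.le), Real.dist_eq, ← sub_div, abs_div,
      abs_of_pos (hpos r hr), div_eq_inv_mul, Real.dist_eq]
    gcongr
    exact hI hr
  refine ⟨hlam, ?_, fun r hr => by simpa using hF0 r hr, fun r hr y => h.mul_sub_le (hpos r hr) _,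
    fun r hr m => (h.monotone_right hn hlam (hpos r hr) m).comp
      fun y y' hy => div_le_div_of_nonneg_right hy (hpos r hr).le,
    fun r hr => LipschitzWith.uncurry (fun y => h.lipschitzWith_left hlam (hpos r hr) _)
      fun m => (h.lipschitzWith_right hn hlam (hpos r hr) m).comp (hdiv r hr)⟩
  refine hF.comp (f := fun q : ℝ × ℝ × ℝ => (q.1, q.2.1, q.2.2 / q.1)) ?_
    fun q hq => ⟨hq.1, trivial⟩
  fun_prop (disch := exact fun q hq => (hpos _ hq.1).ne')

end UnifElliptic

namespace IsElliptic

variable {F : ℝ → ℝ → ℝ → ℝ} {I : Set ℝ} {lam : ℝ} {L : ℝ≥0}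

theorem neg (hF : IsElliptic F I lam L) : IsElliptic (fun r m y => -F r (-m) (-y)) I lam L where
  pos := hF.pos
  continuousOn := (hF.continuousOn.comp
    (by fun_prop : Continuous fun q : ℝ × ℝ × ℝ => (q.1, -q.2.1, -q.2.2)).continuousOn
    fun q hq => ⟨hq.1, trivial⟩).neg
  apply_zero r hr := by simp [hF.apply_zero r hr]
  mul_sub_le r hr y m m' hm := by
    simpa [neg_add_eq_sub] using hF.mul_sub_le r hr (-y) (-m') (-m) (neg_le_neg hm)
  monotone r hr m y y' hy := neg_le_neg (hF.monotone r hr (-m) (neg_le_neg hy))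
  lipschitzWith r hr := by
    have := ((hF.lipschitzWith r hr).comp LipschitzWith.id.neg).neg
    rwa [mul_one] at this

theorem comp_projIcc {a b : ℝ} (hab : a ≤ b) (hF : IsElliptic F (Icc a b) lam L) :
    IsElliptic (fun r => F (projIcc a b hab r)) univ lam L where
  pos := hF.pos
  continuousOn := hF.continuousOn.comp
    (f := fun q : ℝ × ℝ × ℝ => ((projIcc a b hab q.1 : ℝ), q.2))
    (by have := continuous_projIcc (h := hab); fun_prop) fun q _ => ⟨Subtype.coe_prop _, trivial⟩
  apply_zero _ _ := hF.apply_zero _ (Subtype.coe_prop _)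
  mul_sub_le _ _ := hF.mul_sub_le _ (Subtype.coe_prop _)
  monotone _ _ := hF.monotone _ (Subtype.coe_prop _)
  lipschitzWith _ _ := hF.lipschitzWith _ (Subtype.coe_prop _)

theorem mul_abs_sub_le (hF : IsElliptic F I lam L) {r : ℝ} (hr : r ∈ I) (m m' y y' : ℝ) :
    lam * |m - m'| ≤ |F r m y - F r m' y'| + L * |y - y'| := by
  have hm : lam * |m - m'| ≤ |F r m y - F r m' y| := by
    wlog hle : m' ≤ m generalizing m m'
    · rw [abs_sub_comm m, abs_sub_comm (F r m y)]
      exact this m' m (le_of_not_ge hle)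
    · rw [abs_of_nonneg (sub_nonneg.2 hle)]
      exact (hF.mul_sub_le r hr y m' m hle).trans (le_abs_self _)
  have hy : |F r m' y' - F r m' y| ≤ L * |y - y'| := by
    simpa [Real.dist_eq, Prod.dist_eq, abs_sub_comm] using
      (hF.lipschitzWith r hr).dist_le_mul (m', y') (m', y)
  linarith [abs_sub_le (F r m y) (F r m' y') (F r m' y)]

theorem nonneg_of_apply_neg_le (hF : IsElliptic F I lam L) {r y x : ℝ} (hr : r ∈ I) (hy : 0 ≤ y)
    (hx : F r (-x) y ≤ 0) : 0 ≤ x := by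
  by_contra! hneg
  have hinc := hF.mul_sub_le r hr 0 0 (-x) (by linarith)
  rw [hF.apply_zero r hr] at hinc
  linarith [mul_pos hF.pos (neg_pos.2 hneg), hF.monotone r hr (-x) hy]

theorem neg_apply_neg_le_mul (hF : IsElliptic F I lam L) {r y x : ℝ} (hr : r ∈ I) (hy : 0 ≤ y)
    (hx : 0 ≤ x) : -F r (-x) y ≤ L * x := by
  have hL : |F r 0 0 - F r (-x) 0| ≤ L * x := by
    simpa [Real.dist_eq, Prod.dist_eq, abs_of_nonneg hx, hx] using
      (hF.lipschitzWith r hr).dist_le_mul (0, 0) (-x, 0)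
  rw [hF.apply_zero r hr, zero_sub] at hL
  exact (neg_le_neg (hF.monotone r hr (-x) hy)).trans ((le_abs_self _).trans hL)

theorem surjective (hF : IsElliptic F univ lam L) (r y : ℝ) : Surjective (F r · y) := by
  refine surjective_of_mul_sub_le ?_ hF.pos (hF.mul_sub_le r trivial y)
  exact (hF.lipschitzWith r trivial).continuous.comp (by fun_prop : Continuous fun m => (m, y))

end IsElliptic

/-- The equation `-F t w'' w' = c` solved for the second derivative reads `w'' = -G t w' c`;
`IsNormalForm G K L` collects the properties that `G` inherits from an elliptic `F`. -/
structure IsNormalForm (G : ℝ → ℝ → ℝ → ℝ) (K L : ℝ≥0) : Prop where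
  continuous : Continuous fun q : ℝ × ℝ × ℝ => G q.1 q.2.1 q.2.2
  lipschitzWith : ∀ t, LipschitzWith K (uncurry (G t))
  apply_zero : ∀ t, G t 0 0 = 0
  nonneg : ∀ t y c, 0 ≤ y → 0 ≤ c → 0 ≤ G t y c
  le_mul : ∀ t y c, 0 ≤ y → 0 ≤ c → c ≤ L * G t y c

theorem IsElliptic.exists_isNormalForm {F : ℝ → ℝ → ℝ → ℝ} {lam : ℝ} {L : ℝ≥0}
    (hF : IsElliptic F univ lam L) :
    ∃ G K, IsNormalForm G K L ∧ ∀ t y c, F t (-G t y c) y = -c := by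
  have hsolve : ∀ t y c, ∃ m, F t m y = -c := fun t y c => hF.surjective t y (-c)
  choose m hm using hsolve
  have hnonneg : ∀ t y c, 0 ≤ y → 0 ≤ c → 0 ≤ -m t y c := fun t y c hy hc =>
    hF.nonneg_of_apply_neg_le (mem_univ t) hy (by simpa [hm] using hc)
  refine ⟨fun t y c => -m t y c, ((1 + L) / lam).toNNReal, ⟨?_, fun t => ?_, fun t => ?_, hnonneg,
    fun t y c hy hc => ?_⟩, by simpa using hm⟩
  · have hFc : Continuous fun q : ℝ × ℝ × ℝ => F q.1 q.2.1 q.2.2 := by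
      simpa using hF.continuousOn
    have hmono : ∀ q : ℝ × ℝ × ℝ, StrictMono (F q.1 · q.2.1) := fun q =>
      strictMono_of_mul_sub_le hF.pos (hF.mul_sub_le q.1 trivial q.2.1)
    exact (continuous_of_strictMono_of_apply_eq (c := fun q => -q.2.2) hmono
      (fun x => hFc.comp (by fun_prop : Continuous fun q : ℝ × ℝ × ℝ => (q.1, x, q.2.1)))
      (by fun_prop) fun q => hm q.1 q.2.1 q.2.2).neg
  · refine LipschitzWith.of_dist_le_mul fun ⟨y, c⟩ ⟨y', c'⟩ => ?_
    have hdist := hF.mul_abs_sub_le (mem_univ t) (m t y c) (m t y' c') y y'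
    rw [hm, hm, neg_sub_neg] at hdist
    have hpos : 0 < lam := hF.pos
    rw [Real.coe_toNNReal _ (by positivity), div_mul_eq_mul_div, le_div_iff₀' hpos]
    calc lam * dist (-m t y c) (-m t y' c') = lam * |m t y c - m t y' c'| := by
          rw [dist_neg_neg, Real.dist_eq]
      _ ≤ dist c c' + L * dist y y' := by rwa [dist_comm]
      _ ≤ dist (y, c) (y', c') + L * dist (y, c) (y', c') := by
          gcongr
          · exact le_max_right _ _
          · exact le_max_left _ _
      _ = (1 + L) * dist (y, c) (y', c') := by ring
  · have hinj := strictMono_of_mul_sub_le hF.pos (hF.mul_sub_le t trivial 0)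
    exact neg_eq_zero.2 (hinj.injective ((hm t 0 0).trans (by simp [hF.apply_zero t trivial])))
  · have hle := hF.neg_apply_neg_le_mul (mem_univ t) hy (hnonneg t y c hy hc)
    rwa [neg_neg, hm, neg_neg] at hle

theorem IsNormalForm.abs_le {G : ℝ → ℝ → ℝ → ℝ} {K L : ℝ≥0} (hG : IsNormalForm G K L)
    (t y c : ℝ) : |G t y c| ≤ K * |y| + K * |c| := by
  have h := (hG.lipschitzWith t).dist_le_mul (y, c) (0, 0)
  simp only [uncurry, hG.apply_zero, Real.dist_eq, sub_zero, Prod.dist_eq] at h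
  rw [← mul_add]
  exact h.trans (by gcongr; exact max_le_add_of_nonneg (abs_nonneg y) (abs_nonneg c))

theorem IsNormalForm.abs_le_gronwallBound {G : ℝ → ℝ → ℝ → ℝ} {K L : ℝ≥0}
    (hG : IsNormalForm G K L) {y z k : ℝ → ℝ} {a b c : ℝ}
    (hy : ∀ t ∈ Icc a b, HasDerivAt y (-G t (z t) (k t)) t) (hb : y b = 0)
    (hz : ∀ t ∈ Icc a b, |z t| ≤ |y t|) (hk : ∀ t ∈ Icc a b, k t ∈ Icc 0 c) :
    ∀ t ∈ Icc a b, |y t| ≤ gronwallBound 0 K (K * c) (b - a) := by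
  intro t ht
  have hc : 0 ≤ c := (hk t ht).1.trans (hk t ht).2
  refine (norm_le_gronwallBound_of_norm_deriv_left_le (K := K) (ε := K * c) hy
    (by rw [hb, norm_zero]) (fun s hs => ?_) t ht).trans
    (gronwallBound_mono le_rfl (by positivity) K.2 (sub_le_sub_left ht.1 b))
  calc ‖-G s (z s) (k s)‖ ≤ K * |z s| + K * |k s| := by
        rw [norm_neg]
        exact hG.abs_le s (z s) (k s)
    _ ≤ K * ‖y s‖ + K * c := by
        rw [abs_of_nonneg (hk s hs).1]
        gcongr
        exacts [hz s hs, (hk s hs).2]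

/-! ### Backward shooting from the Neumann endpoint -/

/-- A shot of height `γ` for `w'' = -G t w' (g w)`: a nondecreasing solution `w`, with derivative
`y`, that meets the Neumann condition `w' b = 0` and has `w b = γ`. -/
structure IsShot (G : ℝ → ℝ → ℝ → ℝ) (g : ℝ → ℝ) (a b γ : ℝ) (w y : ℝ → ℝ) : Prop where
  apply_right : w b = γ
  deriv_right : y b = 0
  nonneg : ∀ t ∈ Icc a b, 0 ≤ y t
  hasDerivAt : ∀ t ∈ Icc a b, HasDerivAt w (y t) t
  hasDerivAt' : ∀ t ∈ Icc a b, HasDerivAt y (-G t (y t) (g (w t))) t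

/-- The vector field of `w'' = -G t w' (g w)` in the variables `x = (w, w')`, with `w'` projected
onto `[0, M]` so that the field is bounded and its trajectories are nondecreasing in `w`. -/
noncomputable def truncatedField (G : ℝ → ℝ → ℝ → ℝ) (g : ℝ → ℝ) {M : ℝ} (hM : 0 ≤ M)
    (t : ℝ) (x : ℝ × ℝ) : ℝ × ℝ :=
  (projIcc 0 M hM x.2, -G t (projIcc 0 M hM x.2) (g x.1))

section TruncatedField

variable {G : ℝ → ℝ → ℝ → ℝ} {g : ℝ → ℝ} {K L Kg : ℝ≥0} {M c a b : ℝ}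

theorem lipschitzWith_truncatedField (hG : IsNormalForm G K L) (hg : LipschitzWith Kg g)
    (hM : 0 ≤ M) (t : ℝ) : LipschitzWith (max 1 (K * max 1 Kg)) (truncatedField G g hM t) := by
  have hproj : LipschitzWith 1 fun x : ℝ × ℝ => (projIcc 0 M hM x.2 : ℝ) := by
    simpa [comp_def] using (LipschitzWith.subtype_val _).comp
      ((LipschitzWith.projIcc hM).comp LipschitzWith.prod_snd)
  have hfst : LipschitzWith Kg fun x : ℝ × ℝ => g x.1 := by
    simpa [comp_def] using hg.comp LipschitzWith.prod_fst
  exact hproj.prodMk ((hG.lipschitzWith t).comp (hproj.prodMk hfst)).neg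

theorem continuous_truncatedField (hG : IsNormalForm G K L) (hM : 0 ≤ M) (x : ℝ × ℝ) :
    Continuous (truncatedField G g hM · x) :=
  continuous_const.prodMk (hG.continuous.comp
    (by fun_prop : Continuous fun t : ℝ => (t, (projIcc 0 M hM x.2 : ℝ), g x.1))).neg

theorem norm_truncatedField_le (hG : IsNormalForm G K L) (hg : ∀ s, g s ∈ Icc 0 c) (hM : 0 ≤ M)
    (t : ℝ) (x : ℝ × ℝ) : ‖truncatedField G g hM t x‖ ≤ max M (K * M + K * c) := by
  obtain ⟨hp0, hpM⟩ := (projIcc 0 M hM x.2).2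
  rw [truncatedField, Prod.norm_mk, norm_neg, Real.norm_of_nonneg hp0]
  refine max_le_max hpM ?_
  refine (hG.abs_le t _ _).trans ?_
  rw [abs_of_nonneg hp0, abs_of_nonneg (hg x.1).1]
  gcongr
  exact (hg x.1).2

theorem exists_flow_truncatedField (hG : IsNormalForm G K L) (hg : LipschitzWith Kg g)
    (hgc : ∀ s, g s ∈ Icc 0 c) (hM : 0 ≤ M) (hab : a ≤ b) (R : ℝ≥0) :
    ∃ α : ℝ → ℝ → ℝ × ℝ, ContinuousOn (α · a) (Icc 0 R) ∧ ∀ γ ∈ Icc (0 : ℝ) R,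
      α γ b = (γ, 0) ∧ ∀ t ∈ Icc a b, HasDerivAt (α γ) (truncatedField G g hM t (α γ t)) t := by
  have hB : 0 ≤ max M (K * M + K * c) := hM.trans (le_max_left _ _)
  obtain ⟨α, hα, L', hL'⟩ := (isPicardLindelof_of_bounded_of_lipschitz (L := ⟨_, hB⟩)
    (tmin := a - 1) (tmax := b + 1) ⟨b, by linarith, by linarith⟩ 0 R
    (fun t _ => lipschitzWith_truncatedField hG hg hM t)
    (fun x => (continuous_truncatedField hG hM x).continuousOn)
    fun t _ x => norm_truncatedField_le hG hgc hM t
      x).exists_forall_mem_closedBall_eq_hasDerivWithinAt_lipschitzOnWith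
  have hmaps : MapsTo (fun γ : ℝ => (γ, (0 : ℝ))) (Icc 0 R) (closedBall 0 R) := fun γ hγ => by
    simpa [Prod.norm_def, abs_of_nonneg hγ.1] using hγ.2
  refine ⟨fun γ => α (γ, 0), (hL' a ⟨by linarith, by linarith⟩).continuousOn.comp
    (by fun_prop) hmaps, fun γ hγ => ⟨(hα _ (hmaps hγ)).1, fun t ht => ?_⟩⟩
  exact ((hα _ (hmaps hγ)).2 t ⟨by linarith [ht.1], by linarith [ht.2]⟩).hasDerivAt
    (Icc_mem_nhds (by linarith [ht.1]) (by linarith [ht.2]))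

theorem isShot_of_hasDerivAt_truncatedField (hG : IsNormalForm G K L) (hgc : ∀ s, g s ∈ Icc 0 c)
    (hM : 0 ≤ M) (hKM : gronwallBound 0 K (K * c) (b - a) ≤ M) {γ : ℝ} {x : ℝ → ℝ × ℝ}
    (hxb : x b = (γ, 0))
    (hx : ∀ t ∈ Icc a b, HasDerivAt x (truncatedField G g hM t (x t)) t) :
    IsShot G g a b γ (fun t => (x t).1) fun t => (x t).2 := by
  have hd : ∀ t ∈ Icc a b, HasDerivAt (fun t => (x t).2)
      (-G t (projIcc 0 M hM (x t).2) (g (x t).1)) t := fun t ht => (hx t ht).snd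
  have hanti : AntitoneOn (fun t => (x t).2) (Icc a b) := by
    refine antitoneOn_of_hasDerivWithinAt_nonpos (convex_Icc a b) (HasDerivAt.continuousOn hd)
      (fun t ht => (hd t (interior_subset ht)).hasDerivWithinAt) fun t _ => ?_
    exact neg_nonpos.2 (hG.nonneg t _ _ (projIcc 0 M hM _).2.1 (hgc _).1)
  have hnonneg : ∀ t ∈ Icc a b, 0 ≤ (x t).2 := fun t ht => by
    simpa [hxb] using hanti ht (right_mem_Icc.2 (ht.1.trans ht.2)) ht.2
  have hle := hG.abs_le_gronwallBound (c := c) hd (by simp [hxb])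
    (fun t _ => by simpa [projIcc_of_le_left hM le_rfl] using
      abs_projIcc_sub_projIcc (c := (x t).2) (d := 0) hM) fun t _ => hgc _
  have hproj : ∀ t ∈ Icc a b, (projIcc 0 M hM (x t).2 : ℝ) = (x t).2 := fun t ht => by
    rw [projIcc_of_mem hM ⟨hnonneg t ht, (le_abs_self _).trans ((hle t ht).trans hKM)⟩]
  refine ⟨by simp [hxb], by simp [hxb], hnonneg, fun t ht => ?_, fun t ht => ?_⟩
  · exact hproj t ht ▸ (hx t ht).fst
  · have := hd t ht
    rwa [hproj t ht] at this

theorem exists_isShot (hG : IsNormalForm G K L) (hg : LipschitzWith Kg g)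
    (hgc : ∀ s, g s ∈ Icc 0 c) (hab : a ≤ b) (R : ℝ≥0) :
    ∃ W Y : ℝ → ℝ → ℝ, ContinuousOn (W · a) (Icc 0 R) ∧
      ∀ γ ∈ Icc (0 : ℝ) R, IsShot G g a b γ (W γ) (Y γ) := by
  obtain ⟨α, hcont, hα⟩ := exists_flow_truncatedField hG hg hgc
    (le_max_left 0 (gronwallBound 0 K (K * c) (b - a))) hab R
  exact ⟨fun γ t => (α γ t).1, fun γ t => (α γ t).2, hcont.fst, fun γ hγ =>
    isShot_of_hasDerivAt_truncatedField hG hgc _ (le_max_right _ _) (hα γ hγ).1 (hα γ hγ).2⟩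

end TruncatedField

theorem sub_div_sub_mul_le_of_concaveOn {w : ℝ → ℝ} {a b t : ℝ} (hw : ConcaveOn ℝ (Icc a b) w)
    (hab : a < b) (hwa : 0 ≤ w a) (ht : t ∈ Icc a b) : (t - a) / (b - a) * w b ≤ w t := by
  have hba : 0 < b - a := sub_pos.2 hab
  have hu : 0 ≤ (b - t) / (b - a) := div_nonneg (sub_nonneg.2 ht.2) hba.le
  have hv : 0 ≤ (t - a) / (b - a) := div_nonneg (sub_nonneg.2 ht.1) hba.le
  have h := hw.2 (left_mem_Icc.2 hab.le) (right_mem_Icc.2 hab.le) hu hv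
    (by rw [← add_div, sub_add_sub_cancel, div_self hba.ne'])
  have hcomb : (b - t) / (b - a) * a + (t - a) / (b - a) * b = t := by
    field_simp
    ring
  simp only [smul_eq_mul, hcomb] at h
  exact (le_add_of_nonneg_left (mul_nonneg hu hwa)).trans h

namespace IsShot

variable {G : ℝ → ℝ → ℝ → ℝ} {g f : ℝ → ℝ} {K L : ℝ≥0} {a b c γ t : ℝ} {w y : ℝ → ℝ}

theorem congr (h : IsShot G g a b γ w y) (hgf : ∀ t ∈ Icc a b, g (w t) = f (w t)) :
    IsShot G f a b γ w y :=
  { h with hasDerivAt' := fun t ht => hgf t ht ▸ h.hasDerivAt' t ht }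

theorem monotoneOn (h : IsShot G g a b γ w y) : MonotoneOn w (Icc a b) :=
  monotoneOn_of_hasDerivWithinAt_nonneg (convex_Icc a b) (HasDerivAt.continuousOn h.hasDerivAt)
    (fun t ht => (h.hasDerivAt t (interior_subset ht)).hasDerivWithinAt)
    fun t ht => h.nonneg t (interior_subset ht)

theorem le (h : IsShot G g a b γ w y) (ht : t ∈ Icc a b) : w t ≤ γ :=
  h.apply_right ▸ h.monotoneOn ht (right_mem_Icc.2 (ht.1.trans ht.2)) ht.2

theorem left_le (h : IsShot G g a b γ w y) (ht : t ∈ Icc a b) : w a ≤ w t :=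
  h.monotoneOn (left_mem_Icc.2 (ht.1.trans ht.2)) ht ht.1

theorem antitoneOn_deriv (h : IsShot G g a b γ w y) (hG : IsNormalForm G K L)
    (hg : ∀ t ∈ Icc a b, 0 ≤ g (w t)) : AntitoneOn y (Icc a b) :=
  antitoneOn_of_hasDerivWithinAt_nonpos (convex_Icc a b) (HasDerivAt.continuousOn h.hasDerivAt')
    (fun t ht => (h.hasDerivAt' t (interior_subset ht)).hasDerivWithinAt) fun t ht =>
      have ht' := interior_subset ht
      neg_nonpos.2 (hG.nonneg t _ _ (h.nonneg t ht') (hg t ht'))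

theorem concaveOn (h : IsShot G g a b γ w y) (hG : IsNormalForm G K L)
    (hg : ∀ t ∈ Icc a b, 0 ≤ g (w t)) : ConcaveOn ℝ (Icc a b) w := by
  have hd := fun t ht => h.hasDerivAt t (interior_subset ht)
  refine AntitoneOn.concaveOn_of_deriv (convex_Icc a b) (HasDerivAt.continuousOn h.hasDerivAt)
    (fun t ht => (hd t ht).differentiableAt.differentiableWithinAt) ?_
  exact ((h.antitoneOn_deriv hG hg).mono interior_subset).congr fun t ht => (hd t ht).deriv.symm

theorem pos (h : IsShot G g a b γ w y) (hG : IsNormalForm G K L)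
    (hg : ∀ t ∈ Icc a b, 0 ≤ g (w t)) (hγ : 0 < γ) (hwa : 0 ≤ w a) (ht : t ∈ Ioc a b) :
    0 < w t := by
  have hab : a < b := ht.1.trans_le ht.2
  refine lt_of_lt_of_le ?_ (sub_div_sub_mul_le_of_concaveOn (h.concaveOn hG hg) hab hwa
    (Ioc_subset_Icc_self ht))
  rw [h.apply_right]
  exact mul_pos (div_pos (sub_pos.2 ht.1) (sub_pos.2 hab)) hγ

theorem left_nonneg (h : IsShot G g a b γ w y) (hG : IsNormalForm G K L) (hab : a ≤ b)
    (hg : ∀ t ∈ Icc a b, g (w t) ∈ Icc 0 c) (hc : gronwallBound 0 K K (b - a) * c * (b - a) ≤ γ) :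
    0 ≤ w a := by
  have hy : ∀ t ∈ Icc a b, -(gronwallBound 0 K K (b - a) * c) ≤ -y t := fun t ht => by
    rw [← gronwallBound_zero_mul]
    exact neg_le_neg ((le_abs_self _).trans (hG.abs_le_gronwallBound h.hasDerivAt' h.deriv_right
      (fun _ _ => le_rfl) hg t ht))
  have hw := mul_sub_le_of_le_hasDerivAt hab (fun t ht => (h.hasDerivAt t ht).neg) hy
  simp only [Pi.neg_apply, h.apply_right] at hw
  linarith

theorem mul_sub_le_deriv (h : IsShot G g a b γ w y) (hG : IsNormalForm G K L) (hc : 0 ≤ c)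
    (ht : t ∈ Icc a b) (hg : ∀ s ∈ Icc t b, c ≤ g (w s)) : c * (b - t) ≤ L * y t := by
  have hmem : ∀ s ∈ Icc t b, s ∈ Icc a b := fun s hs => ⟨ht.1.trans hs.1, hs.2⟩
  have hy := mul_sub_le_of_le_hasDerivAt ht.2
    (fun s hs => (h.hasDerivAt' s (hmem s hs)).const_mul (-(L : ℝ))) (C := c) fun s hs => by
      rw [neg_mul_neg]
      exact (hg s hs).trans
        (hG.le_mul s _ _ (h.nonneg s (hmem s hs)) (hc.trans (hg s hs)))
  simpa [h.deriv_right] using hy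

theorem half_le (h : IsShot G g a b γ w y) (hG : IsNormalForm G K L)
    (hg : ∀ t ∈ Icc a b, 0 ≤ g (w t)) (hab : a < b) (hγ : 0 ≤ γ) (hwa : 0 ≤ w a)
    (ht : t ∈ Icc ((a + b) / 2) b) : γ / 2 ≤ w t := by
  have htab : t ∈ Icc a b := ⟨by linarith [ht.1], ht.2⟩
  have hfrac : 1 / 2 ≤ (t - a) / (b - a) := by
    rw [div_le_div_iff₀ two_pos (sub_pos.2 hab)]
    linarith [ht.1]
  calc γ / 2 = 1 / 2 * w b := by rw [h.apply_right, div_eq_mul_one_div, mul_comm]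
    _ ≤ (t - a) / (b - a) * w b := by
        gcongr
        exact hγ.trans_eq h.apply_right.symm
    _ ≤ w t := sub_div_sub_mul_le_of_concaveOn (h.concaveOn hG hg) hab hwa htab

-- If `w a ≥ 0`, then `w ≥ γ / 2` on the right half of `[a, b]`, so `L * w' ≥ c * (b - a) / 2` on
-- the left half, where `w` would have to rise by more than `γ`.
theorem left_neg (h : IsShot G g a b γ w y) (hG : IsNormalForm G K L)
    (hg : ∀ t ∈ Icc a b, 0 ≤ g (w t)) (hab : a < b) (hγ : 0 ≤ γ) (hc : 0 ≤ c)
    (hgc : ∀ s ∈ Icc (γ / 2) γ, c ≤ g s) (hL : L * γ < c * ((b - a) / 2) ^ 2) : w a < 0 := by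
  by_contra! hwa
  set m := (a + b) / 2
  have ham : m - a = (b - a) / 2 := by ring
  have hmb : b - m = (b - a) / 2 := by ring
  have hmab : m ∈ Icc a b := ⟨by linarith, by linarith⟩
  have hright : c * ((b - a) / 2) ≤ L * y m := hmb ▸ h.mul_sub_le_deriv hG hc hmab fun t ht =>
    hgc _ ⟨h.half_le hG hg hab hγ hwa ht, h.le ⟨hmab.1.trans ht.1, ht.2⟩⟩
  have hleft : ∀ t ∈ Icc a m, c * ((b - a) / 2) ≤ L * y t := fun t ht =>
    hright.trans (mul_le_mul_of_nonneg_left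
      (h.antitoneOn_deriv hG hg ⟨ht.1, ht.2.trans hmab.2⟩ hmab ht.2) L.2)
  have hrise := mul_sub_le_of_le_hasDerivAt hmab.1
    (fun t ht => (h.hasDerivAt t ⟨ht.1, ht.2.trans hmab.2⟩).const_mul (L : ℝ)) hleft
  have hwm : L * (w m - w a) ≤ L * γ :=
    mul_le_mul_of_nonneg_left ((sub_le_self _ hwa).trans (h.le hmab)) L.2
  rw [ham] at hrise
  linarith

end IsShot

/-! ### Superlinear nonlinearities -/

/-- Hypotheses on the right-hand side of `-F r w'' w' = f w` for positive `w`: `f` is nonnegative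
and locally Lipschitz on `[0, ∞)`, and superlinear both at `0` and at infinity. -/
structure IsSuperlinear (f : ℝ → ℝ) : Prop where
  locallyLipschitzOn : LocallyLipschitzOn (Ici 0) f
  nonneg : ∀ s, 0 ≤ s → 0 ≤ f s
  isLittleO_zero : f =o[𝓝[≥] 0] id
  isLittleO_atTop : id =o[atTop] f

theorem isSuperlinear_rpow {p : ℝ} (hp : 1 < p) : IsSuperlinear (· ^ p) where
  locallyLipschitzOn :=
    (Real.contDiff_rpow_const_of_le (n := 1) (mod_cast hp.le)).locallyLipschitz.locallyLipschitzOn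
  nonneg _ hs := Real.rpow_nonneg hs p
  isLittleO_zero := by
    have h := Real.hasDerivAt_rpow_const (x := 0) (p := p) (Or.inr hp.le)
    rw [Real.zero_rpow (sub_pos.2 hp).ne', mul_zero, hasDerivAt_iff_isLittleO] at h
    simpa [Real.zero_rpow (one_pos.trans hp).ne', Function.id_def] using h.mono nhdsWithin_le_nhds
  isLittleO_atTop := by
    have h : (fun _ => (1 : ℝ)) =o[atTop] fun s : ℝ => s ^ (p - 1) :=
      isLittleO_one_left_iff ℝ |>.2
        (tendsto_norm_atTop_atTop.comp (tendsto_rpow_atTop (sub_pos.2 hp)))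
    refine (h.mul_isBigO (isBigO_refl id atTop)).congr' (by simp [Function.id_def]) ?_
    filter_upwards [eventually_gt_atTop 0] with s hs
    rw [id, ← Real.rpow_add_one hs.ne', sub_add_cancel]

namespace IsSuperlinear

variable {f : ℝ → ℝ} {R : ℝ}

theorem exists_le_mul (hf : IsSuperlinear f) {ε : ℝ} (hε : 0 < ε) :
    ∃ γ > 0, ∀ s ∈ Icc 0 γ, f s ≤ ε * γ := by
  obtain ⟨γ, hγ, hsub⟩ := mem_nhdsGE_iff_exists_Icc_subset.1 (hf.isLittleO_zero.def hε)
  refine ⟨γ, hγ, fun s hs => ?_⟩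
  calc f s ≤ ε * ‖s‖ := (le_abs_self _).trans (hsub hs)
    _ ≤ ε * γ := by
      rw [Real.norm_of_nonneg hs.1]
      gcongr
      exact hs.2

theorem eventually_mul_le (hf : IsSuperlinear f) {N : ℝ} (hN : 0 < N) :
    ∀ᶠ γ in atTop, ∀ s ∈ Icc (γ / 2) γ, N * γ ≤ f s := by
  obtain ⟨S, hS⟩ := eventually_atTop.1 (hf.isLittleO_atTop.def (c := (2 * N)⁻¹) (by positivity))
  filter_upwards [eventually_ge_atTop (2 * S), eventually_ge_atTop 0] with γ hγS hγ0 s hs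
  have hs0 : 0 ≤ s := by linarith [hs.1]
  have h := hS s (by linarith [hs.1])
  rw [id, Real.norm_of_nonneg hs0, Real.norm_of_nonneg (hf.nonneg s hs0),
    ← div_eq_inv_mul, le_div_iff₀' (by positivity)] at h
  nlinarith [hs.1]

theorem exists_lipschitzWith_comp_projIcc (hf : IsSuperlinear f) (hR : 0 ≤ R) :
    ∃ C, LipschitzWith C fun s => f (projIcc 0 R hR s) := by
  obtain ⟨C, hC⟩ := (hf.locallyLipschitzOn.mono Icc_subset_Ici_self
    ).exists_lipschitzOnWith_of_compact (isCompact_Icc (a := 0) (b := R))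
  exact ⟨C * 1, hC.to_restrict.comp (LipschitzWith.projIcc hR)⟩

theorem exists_comp_projIcc_mem_Icc (hf : IsSuperlinear f) (hR : 0 ≤ R) :
    ∃ c, ∀ s, f (projIcc 0 R hR s) ∈ Icc 0 c := by
  obtain ⟨c, hc⟩ := (isCompact_Icc (a := 0) (b := R)).bddAbove_image
    (hf.locallyLipschitzOn.continuousOn.mono Icc_subset_Ici_self)
  exact ⟨c, fun s => ⟨hf.nonneg _ (projIcc 0 R hR s).2.1,
    hc (mem_image_of_mem f (projIcc 0 R hR s).2)⟩⟩

end IsSuperlinear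

/-! ### Existence of solutions -/

theorem IsNormalForm.exists_forall_isShot_left_nonneg {G : ℝ → ℝ → ℝ → ℝ} {K L : ℝ≥0}
    {f : ℝ → ℝ} {a b : ℝ} (hG : IsNormalForm G K L) (hf : IsSuperlinear f) (hab : a ≤ b) :
    ∃ γ > 0, ∀ R (hR : 0 ≤ R) w y,
      IsShot G (fun s => f (projIcc 0 R hR s)) a b γ w y → 0 ≤ w a := by
  set Q := gronwallBound 0 K K (b - a) * (b - a) with hQ
  have hQ0 : 0 ≤ Q := by
    have hbound : gronwallBound 0 K K 0 ≤ gronwallBound 0 K K (b - a) :=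
      gronwallBound_mono le_rfl K.2 K.2 (sub_nonneg.2 hab)
    rw [gronwallBound_x0] at hbound
    exact mul_nonneg hbound (sub_nonneg.2 hab)
  obtain ⟨γ, hγ, hsmall⟩ := hf.exists_le_mul (inv_pos.2 (by positivity : 0 < Q + 1))
  refine ⟨γ, hγ, fun R hR w y h => h.left_nonneg hG hab (c := (Q + 1)⁻¹ * γ) (fun t ht => ?_) ?_⟩
  · have hp0 := (projIcc 0 R hR (w t)).2.1
    refine ⟨hf.nonneg _ hp0, hsmall _ ⟨hp0, ?_⟩⟩
    rw [coe_projIcc]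
    exact max_le hγ.le ((min_le_right _ _).trans (h.le ht))
  · rw [mul_right_comm, ← hQ, ← mul_assoc, ← div_eq_mul_inv]
    exact mul_le_of_le_one_left hγ.le ((div_le_one (by positivity)).2 (by linarith))

theorem IsNormalForm.eventually_forall_isShot_left_neg {G : ℝ → ℝ → ℝ → ℝ} {K L : ℝ≥0}
    {f : ℝ → ℝ} {a b : ℝ} (hG : IsNormalForm G K L) (hf : IsSuperlinear f) (hab : a < b) :
    ∀ᶠ R in atTop, ∀ (hR : 0 ≤ R) w y,
      IsShot G (fun s => f (projIcc 0 R hR s)) a b R w y → w a < 0 := by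
  have : 0 < b - a := sub_pos.2 hab
  filter_upwards [hf.eventually_mul_le (N := (L + 1) / ((b - a) / 2) ^ 2) (by positivity),
    eventually_gt_atTop 0] with R hlarge hR0 hR w y h
  refine h.left_neg hG (fun t _ => hf.nonneg _ (projIcc 0 R hR (w t)).2.1) hab hR
    (c := (L + 1) / ((b - a) / 2) ^ 2 * R) (by positivity) (fun s hs => ?_) ?_
  · rw [projIcc_of_mem hR ⟨by linarith [hs.1], hs.2⟩]
    exact hlarge s hs
  · rw [mul_right_comm, div_mul_cancel₀ _ (by positivity)]
    linarith

theorem IsNormalForm.exists_isShot_left_eq_zero {G : ℝ → ℝ → ℝ → ℝ} {K L : ℝ≥0} {f : ℝ → ℝ}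
    {a b : ℝ} (hG : IsNormalForm G K L) (hf : IsSuperlinear f) (hab : a < b) :
    ∃ γ > 0, ∃ w y, IsShot G f a b γ w y ∧ w a = 0 := by
  obtain ⟨γ₀, hγ₀, hsmall⟩ := hG.exists_forall_isShot_left_nonneg hf hab.le
  obtain ⟨R, hlarge, hγ₀R⟩ :=
    ((hG.eventually_forall_isShot_left_neg hf hab).and (eventually_ge_atTop γ₀)).exists
  have hR : 0 ≤ R := hγ₀.le.trans hγ₀R
  obtain ⟨C, hlip⟩ := hf.exists_lipschitzWith_comp_projIcc hR
  obtain ⟨c, hc⟩ := hf.exists_comp_projIcc_mem_Icc hR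
  obtain ⟨W, Y, hcont, hshot⟩ := exists_isShot hG hlip hc hab.le ⟨R, hR⟩
  have h₀ : 0 ≤ W γ₀ a := hsmall R hR _ _ (hshot γ₀ ⟨hγ₀.le, hγ₀R⟩)
  have hlt : W R a < 0 := hlarge hR _ _ (hshot R ⟨hR, le_rfl⟩)
  obtain ⟨γ, hγ, hzero⟩ := intermediate_value_Icc' hγ₀R
    (hcont.mono (Icc_subset_Icc_left hγ₀.le)) ⟨hlt.le, h₀⟩
  have hγshot := hshot γ ⟨hγ₀.le.trans hγ.1, hγ.2⟩
  refine ⟨γ, hγ₀.trans_le hγ.1, W γ, Y γ, hγshot.congr fun t ht => ?_, hzero⟩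
  rw [projIcc_of_mem hR ⟨hzero ▸ hγshot.left_le ht, (hγshot.le ht).trans hγ.2⟩]

theorem IsElliptic.exists_pos_solution {F : ℝ → ℝ → ℝ → ℝ} {f : ℝ → ℝ} {lam a b : ℝ} {L : ℝ≥0}
    (hF : IsElliptic F (Icc a b) lam L) (hf : IsSuperlinear f) (hab : a < b) :
    ∃ w w' w'' : ℝ → ℝ,
      (∀ r ∈ Icc a b, HasDerivAt w (w' r) r) ∧
      (∀ r ∈ Icc a b, HasDerivAt w' (w'' r) r) ∧
      ContinuousOn w'' (Icc a b) ∧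
      w a = 0 ∧ w' b = 0 ∧
      (∀ r ∈ Ioc a b, 0 < w r) ∧
      (∀ r ∈ Ioo a b, -F r (w'' r) (w' r) = f (w r)) := by
  obtain ⟨G, K, hG, hFG⟩ := (hF.comp_projIcc hab.le).exists_isNormalForm
  obtain ⟨γ, hγ, w, y, h, hwa⟩ := hG.exists_isShot_left_eq_zero hf hab
  have hw : ∀ t ∈ Icc a b, 0 ≤ w t := fun t ht => hwa ▸ h.left_le ht
  refine ⟨w, y, fun t => -G t (y t) (f (w t)), h.hasDerivAt, h.hasDerivAt', ?_, hwa,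
    h.deriv_right, fun r hr => h.pos hG (fun t ht => hf.nonneg _ (hw t ht)) hγ hwa.ge hr,
    fun r hr => ?_⟩
  · have hfw := hf.locallyLipschitzOn.continuousOn.comp (HasDerivAt.continuousOn h.hasDerivAt) hw
    exact (hG.continuous.comp_continuousOn
      (continuousOn_id.prodMk ((HasDerivAt.continuousOn h.hasDerivAt').prodMk hfw))).neg
  · have hFr := hFG r (y r) (f (w r))
    rw [projIcc_of_mem hab.le (Ioo_subset_Icc_self hr)] at hFr
    rw [hFr, neg_neg]

theorem mixed_bvp_dirichlet_neumann_annulus_general {F : ℝ → ℝ → ℝ → ℝ} {f : ℝ → ℝ}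
    {lam a b : ℝ} {L : ℝ≥0} (hF : IsElliptic F (Icc a b) lam L) (hf : IsSuperlinear f)
    (hab : a < b) :
    (∃ w w' w'' : ℝ → ℝ,
      (∀ r ∈ Icc a b, HasDerivAt w (w' r) r) ∧
      (∀ r ∈ Icc a b, HasDerivAt w' (w'' r) r) ∧
      ContinuousOn w'' (Icc a b) ∧
      w a = 0 ∧ w' b = 0 ∧
      (∀ r ∈ Ioc a b, 0 < w r) ∧
      (∀ r ∈ Ioo a b, -F r (w'' r) (w' r) = f (w r))) ∧
    (∃ w w' w'' : ℝ → ℝ,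
      (∀ r ∈ Icc a b, HasDerivAt w (w' r) r) ∧
      (∀ r ∈ Icc a b, HasDerivAt w' (w'' r) r) ∧
      ContinuousOn w'' (Icc a b) ∧
      w a = 0 ∧ w' b = 0 ∧
      (∀ r ∈ Ioc a b, w r < 0) ∧
      (∀ r ∈ Ioo a b, -F r (w'' r) (w' r) = -f |w r|)) := by
  refine ⟨hF.exists_pos_solution hf hab, ?_⟩
  obtain ⟨w, w', w'', hw, hw', hw'', hwa, hwb, hpos, heq⟩ := hF.neg.exists_pos_solution hf hab
  refine ⟨-w, -w', -w'', fun r hr => (hw r hr).neg, fun r hr => (hw' r hr).neg, hw''.neg,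
    by simp [hwa], by simp [hwb], fun r hr => neg_lt_zero.2 (hpos r hr), fun r hr => ?_⟩
  have habs : |(-w) r| = w r := by
    rw [Pi.neg_apply, abs_neg, abs_of_pos (hpos r (Ioo_subset_Ioc_self hr))]
  rw [habs, ← heq r hr, neg_neg]
  rfl

/-- Theorem (mixed boundary value problem, Dirichlet at `|x| = a`, Neumann at `|x| = b`):
`F(x,D²u) + |u|^{p−1}u = 0` in `A_{a,b}`, `u = 0` on `|x| = a`, `∂u/∂n = 0` on `|x| = b`,
has a positive and a negative radial solution. -/
theorem mixed_bvp_dirichlet_neumann_annulus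
    (n : ℕ) (hn : 2 ≤ n) (lam Lam p : ℝ) (hlam : 0 < lam) (hlL : lam ≤ Lam) (hp : 1 < p)
    (F : ℝ → ℝ → ℝ → ℝ)
    (hFcont : Continuous fun x : ℝ × ℝ × ℝ => F x.1 x.2.1 x.2.2)
    (hF0 : ∀ r : ℝ, F r 0 0 = 0)
    (hFell : UnifElliptic n lam Lam F)
    (a b : ℝ) (ha : 0 < a) (hab : a < b) :
    (∃ w w' w'' : ℝ → ℝ,
      (∀ r ∈ Icc a b, HasDerivAt w (w' r) r) ∧
      (∀ r ∈ Icc a b, HasDerivAt w' (w'' r) r) ∧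
      ContinuousOn w'' (Icc a b) ∧
      w a = 0 ∧ w' b = 0 ∧
      (∀ r ∈ Ioc a b, 0 < w r) ∧
      (∀ r ∈ Ioo a b, -F r (w'' r) (w' r / r) = w r ^ p)) ∧
    (∃ w w' w'' : ℝ → ℝ,
      (∀ r ∈ Icc a b, HasDerivAt w (w' r) r) ∧
      (∀ r ∈ Icc a b, HasDerivAt w' (w'' r) r) ∧
      ContinuousOn w'' (Icc a b) ∧
      w a = 0 ∧ w' b = 0 ∧
      (∀ r ∈ Ioc a b, w r < 0) ∧
      (∀ r ∈ Ioo a b, -F r (w'' r) (w' r / r) = -(|w r| ^ p))) :=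
  mixed_bvp_dirichlet_neumann_annulus_general
    (hFell.isElliptic_comp_div (one_le_two.trans hn) hlam ha (fun _ hr => hr.1)
      hFcont.continuousOn fun r _ => hF0 r) (isSuperlinear_rpow hp) hab
end
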